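/- Let S be a nonempty set of codes of finite presentations that is closed under isomorphism (if c ∈ S and the group presented by a code c' is isomorphic to the group presented by c, then c' ∈ S). Suppose the isomorphism problem is solvable within S, i.e. there is a computable function d on pairs of codes such that for all c, c' ∈ S, d (c, c') = true if and only if the groups presented by c and c' are isomorphic. Then S is not a computable (decidable) set; i.e. there is no computable function m on codes with m c = true if and only if c ∈ S. -/

import Mathlib

/-!
Fix a code `c₀` in the class. If both the class and the isomorphism problem within it were decidable,
then, the class being closed under isomorphism, one could decide for every code whether it presents
the group `G₀` of `c₀`. It is shown that this is undecidable for every finitely presented group `G₀`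
(`not_computable_iso`).

To a number `n` one computably associates a finite presentation of a group `Aₙ` which is trivial if a
certain machine halts on input `n` and has an infinite quotient otherwise. The free product `G₀ * Aₙ`
is finitely presented, and it is isomorphic to `G₀` in the first case. In the second case `G₀` does not
even map onto it, as a finitely generated group never maps onto its free product with an infinite
group `A` (`not_surjective_coprod`). Indeed, by iteration it would map onto the free product `Γ` of `M`
copies of `A` for every `M`. But a free product of `M` infinite groups needs at least `M` generators:
the `ℓ²`-cocycles of `Γ` which are inner on every factor are determined by their values on generators,
and this gives an injective equivariant operator `ℓ²(Γ)^M → ℓ²(Γ)^r` if there are `r` generators. The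
inequality `M ≤ r` then follows from the monotonicity of the von Neumann dimension
(`card_le_of_equivariant`), which is proved with the trace and the mean ergodic theorem. The argument
replaces Grushko's theorem.

The groups `Aₙ` come from the halting problem in the following steps.

* The stack machines of Mathlib evaluating partial recursive functions are turned into finite systems
  of affine instructions on integer registers, by reading stacks as numbers in base `5`. As the machines
  are deterministic, halting amounts to the connectedness of the initial configuration with a fixed
  final one under the equivalence relation generated by the steps (`exists_undecidable_system`).
* In a group with commuting letters `ξ l` for the registers and a letter `t q` for each state, a
  configuration `(q, v)` is represented by the conjugate of `t q` by `∏ ξ l ^ v l`. These elements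
  freely generate the normal factor of a semidirect product, in which an affine instruction induces an
  isomorphism of subgroups, and so can be executed by the stable letter of an HNN extension.
  A further letter `k` commutes with the stable letters and with the final configuration. It follows
  that `k` commutes with all configurations connected to the final one (`AffSys.Rel.commute`). By
  Britton's lemma the commutator with any other configuration can be of infinite order
  (`AffSys.exists_group`).
* Rabin's construction adds letters and relations such that the whole group collapses if a given
  element `w` is trivial, but the group embeds if `w` has infinite order (`exists_rabin`). It is
  applied to the commutator `w` of `k` and the initial configuration for the input `n`.
-/

/-- The element of `FreeGroup (Fin n)` represented by a coded word: an entry `(i, b)`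
denotes the `(i % n)`-th generator if `b = true` and its inverse if `b = false`. -/
def wordToFree (n : ℕ) (w : List (ℕ × Bool)) : FreeGroup (Fin n) :=
  (w.map fun p =>
    if h : 0 < n then
      (if p.2 then FreeGroup.of (⟨p.1 % n, Nat.mod_lt _ h⟩ : Fin n)
       else (FreeGroup.of (⟨p.1 % n, Nat.mod_lt _ h⟩ : Fin n))⁻¹)
    else 1).prod

/-- The set of relators of the finite presentation coded by `c`. -/
def codeRels (c : ℕ × List (List (ℕ × Bool))) : Set (FreeGroup (Fin c.1)) :=
  {g | ∃ w ∈ c.2, g = wordToFree c.1 w}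

/-- The group presented by the code `c`: the quotient of `FreeGroup (Fin c.1)` by the
normal closure of the relators. -/
abbrev codeGroup (c : ℕ × List (List (ℕ × Bool))) : Type :=
  PresentedGroup (codeRels c)

/-! ### HNN extensions -/

namespace IsoClass
open Function

section HNN
variable {G : Type} [Group G] {A B : Subgroup G} {φ : A ≃* B}

/-- The restriction of the HNN data `φ : A ≃* B` to a subgroup `T` satisfying
`a ∈ T ↔ φ a ∈ T` for all `a ∈ A`. -/
def restrictEquiv (φ : A ≃* B) (T : Subgroup G) (h : ∀ a : A, (a : G) ∈ T ↔ (φ a : G) ∈ T) :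
    A.subgroupOf T ≃* B.subgroupOf T where
  toFun x := ⟨⟨φ ⟨x.1.1, x.2⟩, (h _).1 x.1.2⟩, (φ ⟨x.1.1, x.2⟩).2⟩
  invFun x := ⟨⟨φ.symm ⟨x.1.1, x.2⟩, (h _).2 (by simp)⟩, (φ.symm ⟨x.1.1, x.2⟩).2⟩
  left_inv x := Subtype.ext <| Subtype.ext <|
    congrArg (fun a : A => (a : G)) (φ.symm_apply_apply ⟨x.1.1, x.2⟩)
  right_inv x := Subtype.ext <| Subtype.ext <|
    congrArg (fun b : B => (b : G)) (φ.apply_symm_apply ⟨x.1.1, x.2⟩)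
  map_mul' x y := by
    ext
    have : (⟨(x.1 * y.1 : T), (x * y).2⟩ : A) = ⟨x.1.1, x.2⟩ * ⟨y.1.1, y.2⟩ := rfl
    simp only [Subgroup.coe_mul, MulMemClass.mk_mul_mk]
    exact congrArg Subtype.val (φ.map_mul ⟨x.1.1, x.2⟩ ⟨y.1.1, y.2⟩)

/-- The homomorphism from the HNN extension of `T` to that of `G`. -/
def restrictMap (φ : A ≃* B) (T : Subgroup G) (h : ∀ a : A, (a : G) ∈ T ↔ (φ a : G) ∈ T) :
    HNNExtension T (A.subgroupOf T) (B.subgroupOf T) (restrictEquiv φ T h) →*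
      HNNExtension G A B φ :=
  HNNExtension.lift (HNNExtension.of.comp T.subtype) HNNExtension.t fun a =>
    HNNExtension.t_mul_of (φ := φ) (⟨a.1.1, a.2⟩ : A)

theorem restrictMap_of (T : Subgroup G) (h : ∀ a : A, (a : G) ∈ T ↔ (φ a : G) ∈ T) (t : T) :
    restrictMap φ T h (HNNExtension.of t) = HNNExtension.of (t : G) :=
  HNNExtension.lift_of _ _ _ t

theorem restrictMap_t (T : Subgroup G) (h : ∀ a : A, (a : G) ∈ T ↔ (φ a : G) ∈ T) :
    restrictMap φ T h HNNExtension.t = HNNExtension.t :=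
  HNNExtension.lift_t _ _ _

/-- Consequence of Britton's lemma: an element of the HNN extension of `T` which becomes an element
of `G` lies in `T`. A reduced word over `T` is also reduced over `G`. -/
theorem exists_of_restrictMap_eq (T : Subgroup G) (h : ∀ a : A, (a : G) ∈ T ↔ (φ a : G) ∈ T)
    (x : HNNExtension T (A.subgroupOf T) (B.subgroupOf T) (restrictEquiv φ T h)) (g : G)
    (hx : restrictMap φ T h x = HNNExtension.of g) : ∃ t : T, x = HNNExtension.of t := by
  obtain ⟨d⟩ := HNNExtension.NormalWord.TransversalPair.nonempty T (A.subgroupOf T)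
    (B.subgroupOf T)
  obtain ⟨w, rfl⟩ : ∃ w : HNNExtension.NormalWord d,
      w.prod (restrictEquiv φ T h) = x :=
    ⟨_, (HNNExtension.NormalWord.equiv (restrictEquiv φ T h) d).symm_apply_apply x⟩
  let w' : HNNExtension.NormalWord.ReducedWord G A B :=
    { head := w.head
      toList := w.toList.map fun p => (p.1, (p.2 : G))
      chain := by
        rw [List.isChain_map]
        refine w.chain.imp ?_
        rintro ⟨u, a⟩ ⟨v, b⟩ hab ha
        refine hab ?_
        rcases Int.units_eq_one_or u with rfl | rfl
        · exact ha
        · exact ha }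
  have key : w'.prod φ = restrictMap φ T h (w.prod (restrictEquiv φ T h)) := by
    simp only [HNNExtension.NormalWord.ReducedWord.prod, map_mul, map_list_prod, w',
      List.map_map, restrictMap_of]
    congr 2
    refine List.map_congr_left fun p _ => ?_
    simp [restrictMap_of, restrictMap_t]
  have hnil : w'.toList = [] :=
    HNNExtension.ReducedWord.toList_eq_nil_of_mem_of_range φ w' ⟨g, by rw [key, hx]⟩
  have hnil' : w.toList = [] := by simpa [w'] using hnil
  exact ⟨w.head, by simp [HNNExtension.NormalWord.ReducedWord.prod, hnil']⟩

theorem restrictMap_injective (T : Subgroup G) (h : ∀ a : A, (a : G) ∈ T ↔ (φ a : G) ∈ T) :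
    Injective (restrictMap φ T h) := by
  rw [injective_iff_map_eq_one]
  intro x hx
  obtain ⟨t, rfl⟩ := exists_of_restrictMap_eq T h x 1 (by rw [hx, map_one])
  have : (HNNExtension.of (t : G) : HNNExtension G A B φ) = HNNExtension.of 1 := by
    simpa [restrictMap_of] using hx
  have ht : t = 1 := Subtype.ext (HNNExtension.of_injective _ this)
  rw [ht, map_one]

end HNN

/-- The isomorphism between the ranges of two injective homomorphisms. -/
noncomputable def rangeEquiv {C G : Type} [Group C] [Group G] {J J' : C →* G} (hJ : Injective J)
    (hJ' : Injective J') : J.range ≃* J'.range :=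
  (MonoidHom.ofInjective hJ).symm.trans (MonoidHom.ofInjective hJ')

theorem rangeEquiv_apply {C G : Type} [Group C] [Group G] {J J' : C →* G} (hJ : Injective J)
    (hJ' : Injective J') (c : C) :
    (rangeEquiv hJ hJ' ⟨J c, ⟨c, rfl⟩⟩ : G) = J' c := by
  have : (⟨J c, ⟨c, rfl⟩⟩ : J.range) = MonoidHom.ofInjective hJ c := rfl
  rw [this, rangeEquiv, MulEquiv.trans_apply, MulEquiv.symm_apply_apply]
  rfl

/-- One HNN extension, with the associated subgroups given as ranges of injective homomorphisms
from a common group. The last clause says that a compatible subgroup `T` of the base does not grow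
when the stable letter is adjoined to it. -/
theorem exists_hnn {C G : Type} [Group C] [Group G] (J J' : C →* G) (hJ : Injective J)
    (hJ' : Injective J') :
    ∃ (E : Type) (_ : Group E) (ι : G →* E) (s : E), Injective ι ∧
      (∀ c, s * ι (J c) = ι (J' c) * s) ∧
      ∀ T : Subgroup G, (∀ c, J c ∈ T ↔ J' c ∈ T) →
        ∀ g, ι g ∈ Subgroup.closure (ι '' T ∪ {s}) → g ∈ T := by
  refine ⟨HNNExtension G J.range J'.range (rangeEquiv hJ hJ'), inferInstance, HNNExtension.of,
    HNNExtension.t, HNNExtension.of_injective _, fun c => ?_, fun T hT g hg => ?_⟩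
  · rw [← rangeEquiv_apply hJ hJ' c]
    exact HNNExtension.t_mul_of (φ := rangeEquiv hJ hJ') ⟨J c, ⟨c, rfl⟩⟩
  · have h : ∀ a : J.range, (a : G) ∈ T ↔ (rangeEquiv hJ hJ' a : G) ∈ T := by
      rintro ⟨_, c, rfl⟩
      rw [rangeEquiv_apply hJ hJ' c]
      exact hT c
    have hle : Subgroup.closure (HNNExtension.of '' (T : Set G) ∪ {HNNExtension.t}) ≤
        (restrictMap (rangeEquiv hJ hJ') T h).range := by
      rw [Subgroup.closure_le]
      rintro _ (⟨t, ht, rfl⟩ | rfl)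
      · exact ⟨HNNExtension.of ⟨t, ht⟩, by simp [restrictMap_of]⟩
      · exact ⟨HNNExtension.t, by simp [restrictMap_t]⟩
    obtain ⟨x, hx⟩ := hle hg
    obtain ⟨t, rfl⟩ := exists_of_restrictMap_eq T h x g hx
    have : (HNNExtension.of (t : G) : HNNExtension G J.range J'.range (rangeEquiv hJ hJ')) =
        HNNExtension.of g := by
      simpa [restrictMap_of] using hx
    rw [← HNNExtension.of_injective _ this]
    exact t.2

/-- Iterated HNN extension over a finite family of pairs of injective homomorphisms. -/
theorem exists_multi_hnn (I : Type) [Finite I] {C G : Type} [Group C] [Group G]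
    (J J' : I → C →* G) (hJ : ∀ i, Injective (J i)) (hJ' : ∀ i, Injective (J' i)) :
    ∃ (E : Type) (_ : Group E) (ι : G →* E) (s : I → E), Injective ι ∧
      (∀ i c, s i * ι (J i c) = ι (J' i c) * s i) ∧
      ∀ T : Subgroup G, (∀ i c, J i c ∈ T ↔ J' i c ∈ T) →
        ∀ g, ι g ∈ Subgroup.closure (ι '' T ∪ Set.range s) → g ∈ T := by
  revert J J' hJ hJ'
  refine Finite.induction_empty_option (P := fun I : Type => ∀ (J J' : I → C →* G),
    (∀ i, Injective (J i)) → (∀ i, Injective (J' i)) →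
    ∃ (E : Type) (_ : Group E) (ι : G →* E) (s : I → E), Injective ι ∧
      (∀ i c, s i * ι (J i c) = ι (J' i c) * s i) ∧
      ∀ T : Subgroup G, (∀ i c, J i c ∈ T ↔ J' i c ∈ T) →
        ∀ g, ι g ∈ Subgroup.closure (ι '' T ∪ Set.range s) → g ∈ T) ?_ ?_ ?_ I
  · intro α β e ih J J' hJ hJ'
    obtain ⟨E, _, ι, s, h1, h2, h3⟩ := ih (J ∘ e) (J' ∘ e) (fun i => hJ _) (fun i => hJ' _)
    refine ⟨E, inferInstance, ι, s ∘ e.symm, h1, fun i c => ?_, fun T hT g hg => ?_⟩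
    · simpa using h2 (e.symm i) c
    · refine h3 T (fun i c => hT _ c) g ?_
      rwa [EquivLike.range_comp s e.symm] at hg
  · intro J J' hJ hJ'
    refine ⟨G, inferInstance, MonoidHom.id G, fun i => i.elim, injective_id, fun i => i.elim,
      fun T _ g hg => ?_⟩
    simpa [Set.range_eq_empty] using hg
  · intro α _ ih J J' hJ hJ'
    obtain ⟨E, _, ι, s, h1, h2, h3⟩ := ih (fun i => J (some i)) (fun i => J' (some i))
      (fun i => hJ _) (fun i => hJ' _)
    obtain ⟨E', _, ι', s', h1', h2', h3'⟩ := exists_hnn (ι.comp (J none)) (ι.comp (J' none))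
      (h1.comp (hJ none)) (h1.comp (hJ' none))
    refine ⟨E', inferInstance, ι'.comp ι, fun o => o.elim s' (fun i => ι' (s i)),
      h1'.comp h1, ?_, fun T hT g hg => ?_⟩
    · rintro (_ | i) c
      · exact h2' c
      · have := congrArg ι' (h2 i c)
        simpa using this
    · have hT' : ∀ g, ι g ∈ Subgroup.closure (ι '' T ∪ Set.range s) ↔ g ∈ T := fun g =>
        ⟨h3 T (fun i c => hT _ c) g, fun h => Subgroup.subset_closure (Or.inl ⟨g, h, rfl⟩)⟩
      refine (hT' g).1 (h3' (Subgroup.closure (ι '' T ∪ Set.range s)) (fun c => ?_) _ ?_)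
      · exact (hT' _).trans ((hT none c).trans (hT' _).symm)
      · refine (Subgroup.closure_le _).2 ?_ hg
        rintro _ (⟨t, ht, rfl⟩ | ⟨_ | i, rfl⟩)
        · exact Subgroup.subset_closure
            (Or.inl ⟨ι t, Subgroup.subset_closure (Or.inl ⟨t, ht, rfl⟩), rfl⟩)
        · exact Subgroup.subset_closure (Or.inr rfl)
        · exact Subgroup.subset_closure
            (Or.inl ⟨s i, Subgroup.subset_closure (Or.inr ⟨i, rfl⟩), rfl⟩)

/-- If the powers of an element `w` of infinite order meet the associated subgroups trivially, then
`w` and the stable letter generate a free group of rank two. -/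
theorem exists_hnn_free {C G : Type} [Group C] [Group G] (J J' : C →* G) (hJ : Injective J)
    (hJ' : Injective J') (w : G) (hw : Injective (fun n : ℤ => w ^ n))
    (h1 : ∀ (n : ℤ) c, w ^ n = J c → w ^ n = 1) (h2 : ∀ (n : ℤ) c, w ^ n = J' c → w ^ n = 1) :
    ∃ (E : Type) (_ : Group E) (ι : G →* E) (s : E), Injective ι ∧
      (∀ c, s * ι (J c) = ι (J' c) * s) ∧
      Injective (FreeGroup.lift (fun b : Bool => if b then s else ι w)) := by
  refine ⟨HNNExtension G J.range J'.range (rangeEquiv hJ hJ'), inferInstance, HNNExtension.of,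
    HNNExtension.t, HNNExtension.of_injective _, fun c => ?_, ?_⟩
  · rw [← rangeEquiv_apply hJ hJ' c]
    exact HNNExtension.t_mul_of (φ := rangeEquiv hJ hJ') ⟨J c, ⟨c, rfl⟩⟩
  · set T := (zpowersHom G w).range with hT
    have hinj : Injective (zpowersHom G w) := fun a b h =>
      Multiplicative.toAdd.injective (hw (by simpa using h))
    have one_of_J : ∀ c, J c ∈ T → c = 1 := by
      rintro c ⟨n, hn⟩
      have := h1 n.toAdd c (by simpa using hn)
      apply hJ
      rw [← hn, map_one]
      simpa using this
    have one_of_J' : ∀ c, J' c ∈ T → c = 1 := by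
      rintro c ⟨n, hn⟩
      have := h2 n.toAdd c (by simpa using hn)
      apply hJ'
      rw [← hn, map_one]
      simpa using this
    have h : ∀ a : J.range, (a : G) ∈ T ↔ (rangeEquiv hJ hJ' a : G) ∈ T := by
      rintro ⟨_, c, rfl⟩
      rw [rangeEquiv_apply hJ hJ' c]
      constructor
      · intro hc
        rw [one_of_J c hc, map_one]; exact T.one_mem
      · intro hc
        rw [one_of_J' c hc]; simp only [map_one]; exact T.one_mem
    let e : Multiplicative ℤ ≃* T := MonoidHom.ofInjective hinj
    have hA : ∀ a : J.range.subgroupOf T, a = 1 := by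
      rintro ⟨⟨a, ha⟩, ⟨c, hc⟩⟩
      have : c = 1 := one_of_J c (by rw [hc]; exact ha)
      ext
      change a = 1
      rw [← (show J c = a from hc), this, map_one]
    let ρ : HNNExtension T (J.range.subgroupOf T) (J'.range.subgroupOf T)
        (restrictEquiv (rangeEquiv hJ hJ') T h) →* FreeGroup Bool :=
      HNNExtension.lift ((zpowersHom _ (FreeGroup.of false)).comp e.symm.toMonoidHom)
        (FreeGroup.of true) (by
          intro a
          rw [hA a]; simp)
    let σ : FreeGroup Bool →* HNNExtension T (J.range.subgroupOf T) (J'.range.subgroupOf T)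
        (restrictEquiv (rangeEquiv hJ hJ') T h) :=
      FreeGroup.lift (fun b => if b then HNNExtension.t else
        HNNExtension.of (e (Multiplicative.ofAdd 1)))
    have hσ : Injective σ := by
      have : ρ.comp σ = MonoidHom.id _ := by
        ext b
        cases b <;> simp [ρ, σ]
      exact LeftInverse.injective (g := ρ) (DFunLike.congr_fun this)
    have : FreeGroup.lift (fun b : Bool => if b then HNNExtension.t else HNNExtension.of w) =
        (restrictMap (rangeEquiv hJ hJ') T h).comp σ := by
      ext b
      cases b
      · have : ((e (Multiplicative.ofAdd 1) : T) : G) = w := by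
          change zpowersHom G w (Multiplicative.ofAdd 1) = w
          simp
        simp [restrictMap_of, σ, this]
      · simp [restrictMap_t, σ]
    rw [this]
    exact (restrictMap_injective T h).comp hσ

end IsoClass

/-! ### Rabin's construction -/

namespace IsoClass
open Function

/-- Amalgamated products exist, and the factors embed. -/
theorem exists_amalgam {H G₁ G₂ : Type} [Group H] [Group G₁] [Group G₂] (f : H →* G₁) (g : H →* G₂)
    (hf : Injective f) (hg : Injective g) :
    ∃ (E : Type) (_ : Group E) (i₁ : G₁ →* E) (i₂ : G₂ →* E), Injective i₁ ∧
      ∀ h, i₁ (f h) = i₂ (g h) := by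
  let D : Bool → Σ G : GrpCat.{0}, H →* G := fun b =>
    match b with
    | true => ⟨GrpCat.of G₁, f⟩
    | false => ⟨GrpCat.of G₂, g⟩
  let φ : ∀ b, H →* (D b).1 := fun b => (D b).2
  have hφ : ∀ b, Injective (φ b) := fun b => match b with
    | true => hf
    | false => hg
  refine ⟨Monoid.PushoutI φ, inferInstance, Monoid.PushoutI.of (φ := φ) true,
    Monoid.PushoutI.of (φ := φ) false, Monoid.PushoutI.of_injective hφ true, fun h => ?_⟩
  exact (Monoid.PushoutI.of_apply_eq_base φ true h).trans
    (Monoid.PushoutI.of_apply_eq_base φ false h).symm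

/-- The group `⟨r, s, q | s r s⁻¹ = r², q s q⁻¹ = s²⟩` contains `r` and `q` as a basis of a free
subgroup. -/
theorem exists_double_hnn :
    ∃ (Q : Type) (_ : Group Q) (r s q : Q), s * r = r ^ 2 * s ∧ q * s = s ^ 2 * q ∧
      Injective (FreeGroup.lift (fun b : Bool => if b then q else r)) := by
  -- The affine maps `x ↦ x + 1` and `x ↦ 2 x` of `ℚ`.
  let r : Equiv.Perm ℚ := Equiv.addRight 1
  let s : Equiv.Perm ℚ := Equiv.mulLeft₀ 2 two_ne_zero
  have hr : ∀ (n : ℤ) (x : ℚ), (r ^ n) x = x + n := by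
    intro n x
    induction n with
    | zero => simp
    | succ n ih => rw [zpow_add_one, Equiv.Perm.mul_apply, ← Equiv.Perm.mul_apply,
        ← zpow_add_one, add_comm (n : ℤ) 1, zpow_one_add, Equiv.Perm.mul_apply, ih]; simp [r]; ring
    | pred n ih =>
      rw [sub_eq_add_neg, add_comm, zpow_add, Equiv.Perm.mul_apply, ih]
      have : ∀ y, (r ^ (-1 : ℤ)) y = y - 1 := by
        intro y; rw [zpow_neg_one, Equiv.Perm.inv_eq_iff_eq]; simp [r]
      rw [this]; push_cast; ring
  have hs : ∀ (n : ℤ) (x : ℚ), (s ^ n) x = 2 ^ n * x := by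
    intro n x
    induction n with
    | zero => simp
    | succ n ih =>
      rw [add_comm, zpow_one_add, Equiv.Perm.mul_apply, ih, zpow_one_add₀ two_ne_zero]
      simp [s]; ring
    | pred n ih =>
      rw [sub_eq_add_neg, add_comm, zpow_add, Equiv.Perm.mul_apply, ih, zpow_add₀ two_ne_zero]
      have : ∀ y, (s ^ (-1 : ℤ)) y = 2 ^ (-1 : ℤ) * y := by
        intro y; rw [zpow_neg_one, Equiv.Perm.inv_eq_iff_eq]; simp [s]
      rw [this]; ring
  have hsr : s * r = r ^ 2 * s := by
    ext x; simp [s, r, pow_two]; ring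
  have hs1 : ∀ n : ℤ, s ^ n = 1 → n = 0 := by
    intro n h
    have := hs n 1
    rw [h] at this
    simpa using (zpow_eq_one_iff_right₀ (a := (2 : ℚ)) (by norm_num) (by norm_num)).1
      (by simpa using this.symm)
  have hrs : ∀ n m : ℤ, r ^ n = s ^ m → r ^ n = 1 := by
    intro n m h
    have h0 := hr n 0
    rw [h, hs] at h0
    have : n = 0 := by simpa using h0.symm
    simp [this]
  obtain ⟨Q, _, ι, q, -, h2, h3⟩ := exists_hnn_free (zpowersHom _ s) (zpowersHom _ (s ^ 2))
    ((injective_iff_map_eq_one _).2 fun n h => by simpa using hs1 n.toAdd (by simpa using h))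
    ((injective_iff_map_eq_one _).2 fun n h => by
      have := hs1 (2 * n.toAdd) (by rw [zpow_mul]; simpa using h)
      simpa using this) r
    (fun a b h => by
      have := congrArg (fun f : Equiv.Perm ℚ => f 0) h
      simpa [hr] using this)
    (fun n c h => hrs n c.toAdd (by simpa using h))
    (fun n c h => hrs n (2 * c.toAdd) (by rw [zpow_mul]; simpa using h))
  refine ⟨Q, inferInstance, ι r, ι s, q, ?_, ?_, h3⟩
  · rw [← map_mul, hsr, map_mul, map_pow]
  · simpa using h2 (Multiplicative.ofAdd 1)

/-- The relations of a Rabin-type construction on elements `y i` (meant as generators of a group)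
and `w`: together with `w = 1` they successively force `s`, `v`, all `u i b` and all `y i` to be
trivial. -/
structure RabinRel {Y E : Type} [Group E] (y : Y → E) (w : E) (u : Y → Bool → E) (v s : E) :
    Prop where
  hu : ∀ i b, u i b * y i = y i ^ 2 * u i b
  hv₀ : ∀ i, v * u i false = u i false * u i true * v
  hv₁ : ∀ i, v * u i true = u i false * v
  hs : s * v = v ^ 2 * s
  hw : w * s = s ^ 2 * w

theorem RabinRel.trivial {Y E : Type} [Group E] {y : Y → E} {w : E} {u : Y → Bool → E} {v s : E}
    (h : RabinRel y w u v s) (hw : w = 1) :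
    s = 1 ∧ v = 1 ∧ (∀ i b, u i b = 1) ∧ ∀ i, y i = 1 := by
  have sq : ∀ a b : E, a = 1 → a * b = b ^ 2 * a → b = 1 := by
    intro a b ha hb
    simpa [ha, pow_two] using hb
  have hs := sq _ _ hw h.hw
  have hv := sq _ _ hs h.hs
  have hu0 : ∀ i, u i true = 1 := fun i => by simpa [hv] using h.hv₀ i
  have hu1 : ∀ i, u i false = 1 := fun i => by simpa [hv, hu0] using (h.hv₁ i).symm
  have hu : ∀ i b, u i b = 1 := fun i b => by cases b <;> simp [hu0, hu1]
  exact ⟨hs, hv, hu, fun i => sq _ _ (hu i false) (h.hu i false)⟩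

/-- Rabin's construction: if `w` and all `y i` have infinite order, then the relations hold in an
overgroup. -/
theorem exists_rabin {P Y : Type} [Group P] [Finite Y] (y : Y → P) (w : P)
    (hy : ∀ i, Injective (fun n : ℤ => y i ^ n)) (hw : Injective (fun n : ℤ => w ^ n)) :
    ∃ (E : Type) (_ : Group E) (ι : P →* E) (u : Y → Bool → E) (v s : E), Injective ι ∧
      RabinRel (fun i => ι (y i)) (ι w) u v s := by
  -- Letters `u₀` conjugating each `y i` to its square.
  obtain ⟨E₀, _, ι₀, u₀, hι₀, hu₀, -⟩ := exists_multi_hnn (Y × Bool) (C := Multiplicative ℤ)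
    (fun p => zpowersHom P (y p.1)) (fun p => zpowersHom P (y p.1 ^ 2))
    (fun p a b h => Multiplicative.toAdd.injective (hy p.1 (by simpa using h)))
    (fun p a b h => by
      have := hy p.1 (a₁ := 2 * a.toAdd) (a₂ := 2 * b.toAdd) (by
        simp only [zpow_mul]; simpa using h)
      exact Multiplicative.toAdd.injective (by simpa using this))
  -- Multiplying with a free group makes these letters free.
  let u₁ : Y × Bool → E₀ × FreeGroup (Y × Bool) := fun p => (u₀ p, FreeGroup.of p)
  let ι₁ : P →* E₀ × FreeGroup (Y × Bool) := ι₀.prod 1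
  let J := FreeGroup.lift u₁
  have hJ : ∀ c, (J c).2 = c := by
    have : (MonoidHom.snd _ _).comp J = MonoidHom.id _ := by
      ext p; simp [J, u₁]
    exact DFunLike.congr_fun this
  -- A free group automorphism without nontrivial coinvariants.
  let fib : FreeGroup (Y × Bool) →* FreeGroup (Y × Bool) := FreeGroup.lift fun p =>
    if p.2 then FreeGroup.of (p.1, false) else FreeGroup.of (p.1, false) * FreeGroup.of (p.1, true)
  let fibInv : FreeGroup (Y × Bool) →* FreeGroup (Y × Bool) := FreeGroup.lift fun p =>
    if p.2 then (FreeGroup.of (p.1, true))⁻¹ * FreeGroup.of (p.1, false)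
    else FreeGroup.of (p.1, true)
  have hfib : ∀ c, fibInv (fib c) = c := by
    have : fibInv.comp fib = MonoidHom.id _ := by
      ext ⟨i, b⟩; cases b <;> simp [fib, fibInv]
    exact DFunLike.congr_fun this
  have hinjJ : Injective J := fun a b h => by rw [← hJ a, ← hJ b, h]
  obtain ⟨E₂, _, ι₂, v, hι₂, hv, hfree⟩ := exists_hnn_free J (J.comp fib) hinjJ
    (hinjJ.comp (LeftInverse.injective hfib)) (ι₁ w)
    (fun a b h => hw (hι₀ (by simpa [ι₁] using h)))
    (fun n c h => by
      have : c = 1 := by rw [← hJ c, ← h]; simp [ι₁]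
      rw [h, this, map_one])
    (fun n c h => by
      have : fib c = 1 := by rw [← hJ (fib c)]; change (J.comp fib c).2 = 1; rw [← h]; simp [ι₁]
      rw [h, MonoidHom.comp_apply, this, map_one])
  obtain ⟨Q, _, r, s, q, hsr, hqs, hQ⟩ := exists_double_hnn
  have hQ' : Injective (FreeGroup.lift (fun b : Bool => if b then r else q)) := by
    have : FreeGroup.lift (fun b : Bool => if b then r else q) =
        (FreeGroup.lift (fun b : Bool => if b then q else r)).comp
          (FreeGroup.freeGroupCongr Equiv.boolNot).toMonoidHom := by
      ext b; cases b <;> simp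
    rw [this]
    exact hQ.comp (FreeGroup.freeGroupCongr Equiv.boolNot).injective
  obtain ⟨E, _, i₁, i₂, hi₁, hi⟩ := exists_amalgam _ _ hfree hQ'
  have hvr : i₁ v = i₂ r := by simpa using hi (FreeGroup.of true)
  have hwq : i₁ (ι₂ (ι₁ w)) = i₂ q := by simpa using hi (FreeGroup.of false)
  refine ⟨E, inferInstance, (i₁.comp ι₂).comp ι₁, fun i b => i₁ (ι₂ (u₁ (i, b))), i₁ v, i₂ s,
    (hi₁.comp hι₂).comp fun a b h => hι₀ (by simpa [ι₁] using h), ?_, ?_, ?_, ?_, ?_⟩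
  · intro i b
    have h1 : u₁ (i, b) * ι₁ (y i) = ι₁ (y i) ^ 2 * u₁ (i, b) := by
      have := hu₀ (i, b) (Multiplicative.ofAdd 1)
      ext
      · simpa [u₁, ι₁] using this
      · simp [u₁, ι₁]
    simpa using congrArg (fun x => i₁ (ι₂ x)) h1
  · intro i
    have := hv (FreeGroup.of (i, false))
    simpa [J, fib] using congrArg i₁ this
  · intro i
    have := hv (FreeGroup.of (i, true))
    simpa [J, fib] using congrArg i₁ this
  · rw [hvr, ← map_mul, hsr, map_mul, map_pow]
  · simp only [MonoidHom.comp_apply]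
    rw [hwq, ← map_mul, hqs, map_mul, map_pow]

end IsoClass

/-! ### Affine systems and groups simulating them -/

namespace IsoClass
open Function
open scoped commutatorElement

/-- A finite system of affine instructions acting on configurations, which consist of a state in `Q`
and a vector of integer registers. Instruction `i` leads, for every `z`, from the state `src i` with
registers `p i + m i * z` to the state `tgt i` with registers `p' i + m' i * z`. -/
structure AffSys (Q κ I : Type) where
  src : I → Q
  tgt : I → Q
  p : I → κ → ℤ
  p' : I → κ → ℤ
  m : I → κ → ℤ
  m' : I → κ → ℤ
  hm : ∀ i l, m i l ≠ 0
  hm' : ∀ i l, m' i l ≠ 0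

variable {Q κ I : Type}

/-- The application of one instruction. -/
def AffSys.Step (M : AffSys Q κ I) (c c' : Q × (κ → ℤ)) : Prop :=
  ∃ i z, c = (M.src i, M.p i + M.m i * z) ∧ c' = (M.tgt i, M.p' i + M.m' i * z)

section Words
variable [Fintype κ] {P' P : Type} [Group P'] [Group P]

/-- The product of the powers of the elements `ξ l` with exponents `v l`. -/
noncomputable def xp (ξ : κ → P) (v : κ → ℤ) : P :=
  ((Finset.univ : Finset κ).toList.map fun l => ξ l ^ v l).prod

theorem map_xp (f : P →* P') (ξ : κ → P) (v : κ → ℤ) : f (xp ξ v) = xp (fun l => f (ξ l)) v := by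
  simp only [xp, map_list_prod, List.map_map]
  congr 1
  exact List.map_congr_left fun l _ => map_zpow f _ _

theorem xp_add (ξ : κ → P) (h : ∀ l l', ξ l * ξ l' = ξ l' * ξ l) (v w : κ → ℤ) :
    xp ξ (v + w) = xp ξ v * xp ξ w := by
  unfold xp
  induction (Finset.univ : Finset κ).toList with
  | nil => simp
  | cons a L ih =>
    have hc : Commute (ξ a ^ w a) (L.map fun l => ξ l ^ v l).prod := by
      refine Commute.list_prod_right _ _ fun y hy => ?_
      obtain ⟨l, -, rfl⟩ := List.mem_map.1 hy
      exact Commute.zpow_zpow (h a l) _ _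
    simp only [List.map_cons, List.prod_cons]
    rw [ih, Pi.add_apply, zpow_add, mul_assoc, ← mul_assoc (ξ a ^ w a), hc.eq]
    simp only [mul_assoc]

theorem xp_zero (ξ : κ → P) : xp ξ 0 = 1 := by
  simp [xp]

theorem xp_single [DecidableEq κ] (ξ : κ → P) (l : κ) (n : ℤ) : xp ξ (Pi.single l n) = ξ l ^ n := by
  have hnd := (Finset.univ : Finset κ).nodup_toList
  have hl : l ∈ (Finset.univ : Finset κ).toList := by simp
  unfold xp
  revert hnd hl
  induction (Finset.univ : Finset κ).toList with
  | nil => simp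
  | cons a L ih =>
    intro hnd hl
    rw [List.nodup_cons] at hnd
    rw [List.map_cons, List.prod_cons]
    rcases eq_or_ne a l with rfl | hne
    · rw [List.prod_eq_one, mul_one, Pi.single_eq_same]
      intro x hx
      obtain ⟨b, hb, rfl⟩ := List.mem_map.1 hx
      have : b ≠ a := fun h => hnd.1 (h ▸ hb)
      rw [Pi.single_eq_of_ne this, zpow_zero]
    · rw [Pi.single_eq_of_ne hne, zpow_zero, one_mul]
      exact ih hnd.2 ((List.mem_cons.1 hl).resolve_left hne.symm)

theorem semiconj_xp (ξ : κ → P) (s : P) (m m' : κ → ℤ)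
    (h : ∀ l, s * ξ l ^ m l = ξ l ^ m' l * s) (z : κ → ℤ) :
    SemiconjBy s (xp ξ (m * z)) (xp ξ (m' * z)) := by
  unfold xp
  induction (Finset.univ : Finset κ).toList with
  | nil => simp
  | cons a L ih =>
    simp only [List.map_cons, List.prod_cons, Pi.mul_apply, zpow_mul] at ih ⊢
    exact SemiconjBy.mul_right (SemiconjBy.zpow_right (h a) _) ih

/-- The element of the group representing a configuration. -/
noncomputable def conf (t : Q → P) (ξ : κ → P) (c : Q × (κ → ℤ)) : P :=
  xp ξ c.2 * t c.1 * (xp ξ c.2)⁻¹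

theorem map_conf (f : P →* P') (t : Q → P) (ξ : κ → P) (c : Q × (κ → ℤ)) :
    f (conf t ξ c) = conf (fun q => f (t q)) (fun l => f (ξ l)) c := by
  simp [conf, map_xp]

/-- The relations which make a group simulate the system: the letters `s i` transform configurations
by the instructions, and `k` commutes with these letters and with the final configuration. -/
structure AffSys.Rel (M : AffSys Q κ I) (c₀ : Q × (κ → ℤ)) (t : Q → P) (ξ : κ → P) (s : I → P)
    (k : P) : Prop where
  comm : ∀ l l', ξ l * ξ l' = ξ l' * ξ l
  conf : ∀ i, s i * conf t ξ (M.src i, M.p i) = conf t ξ (M.tgt i, M.p' i) * s i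
  scale : ∀ i l, s i * ξ l ^ M.m i l = ξ l ^ M.m' i l * s i
  k_s : ∀ i, k * s i = s i * k
  k_c : k * IsoClass.conf t ξ c₀ = IsoClass.conf t ξ c₀ * k

theorem AffSys.Rel.map {M : AffSys Q κ I} {c₀ : Q × (κ → ℤ)} {t : Q → P} {ξ : κ → P} {s : I → P}
    {k : P} (h : M.Rel c₀ t ξ s k) (f : P →* P') :
    M.Rel c₀ (fun q => f (t q)) (fun l => f (ξ l)) (fun i => f (s i)) (f k) where
  comm l l' := by simpa using congrArg f (h.comm l l')
  conf i := by simpa [map_conf] using congrArg f (h.conf i)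
  scale i l := by simpa using congrArg f (h.scale i l)
  k_s i := by simpa using congrArg f (h.k_s i)
  k_c := by simpa [map_conf] using congrArg f h.k_c

/-- The letter `s i` executes the instruction `i` for every value of the parameter `z`. -/
theorem AffSys.Rel.semiconj {M : AffSys Q κ I} {c₀ : Q × (κ → ℤ)} {t : Q → P} {ξ : κ → P}
    {s : I → P} {k : P} (h : M.Rel c₀ t ξ s k) (i : I) (z : κ → ℤ) :
    SemiconjBy (s i) (IsoClass.conf t ξ (M.src i, M.p i + M.m i * z))
      (IsoClass.conf t ξ (M.tgt i, M.p' i + M.m' i * z)) := by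
  have key : ∀ q p v, IsoClass.conf t ξ (q, p + v) =
      xp ξ v * IsoClass.conf t ξ (q, p) * (xp ξ v)⁻¹ := by
    intro q p v
    simp only [IsoClass.conf]
    rw [add_comm, xp_add ξ h.comm]
    group
  rw [key, key]
  have h1 := semiconj_xp ξ (s i) (M.m i) (M.m' i) (h.scale i) z
  exact (h1.mul_right (h.conf i)).mul_right h1.inv_right

/-- The letter `k` commutes with all configurations connected to the final one. -/
theorem AffSys.Rel.commute {M : AffSys Q κ I} {c₀ : Q × (κ → ℤ)} {t : Q → P} {ξ : κ → P}
    {s : I → P} {k : P} (h : M.Rel c₀ t ξ s k) {c : Q × (κ → ℤ)}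
    (hc : Relation.EqvGen M.Step c₀ c) : Commute k (IsoClass.conf t ξ c) := by
  have key : ∀ c c', Relation.EqvGen M.Step c c' →
      (Commute k (IsoClass.conf t ξ c) ↔ Commute k (IsoClass.conf t ξ c')) := by
    intro c c' hcc
    induction hcc with
    | rel c c' hs =>
      obtain ⟨i, z, rfl, rfl⟩ := hs
      have h1 := h.semiconj i z
      have hk : Commute k (s i) := h.k_s i
      have e1 : IsoClass.conf t ξ (M.tgt i, M.p' i + M.m' i * z) =
          s i * IsoClass.conf t ξ (M.src i, M.p i + M.m i * z) * (s i)⁻¹ := by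
        rw [h1.eq, mul_inv_cancel_right]
      have e2 : IsoClass.conf t ξ (M.src i, M.p i + M.m i * z) =
          (s i)⁻¹ * IsoClass.conf t ξ (M.tgt i, M.p' i + M.m' i * z) * s i := by
        rw [e1]; group
      constructor
      · intro h2; rw [e1]; exact (hk.mul_right h2).mul_right hk.inv_right
      · intro h2; rw [e2]; exact (hk.inv_right.mul_right h2).mul_right hk
    | refl => rfl
    | symm _ _ _ ih => exact ih.symm
    | trans _ _ _ _ _ ih1 ih2 => exact ih1.trans ih2
  exact (key _ _ hc).1 h.k_c

end Words

/-- The translation action of `ℤ^κ` on the free group with basis the configurations. -/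
def transAct (Q κ : Type) : Multiplicative (κ → ℤ) →* MulAut (FreeGroup (Q × (κ → ℤ))) where
  toFun d := FreeGroup.freeGroupCongr
    (Equiv.prodCongr (Equiv.refl Q) (Equiv.addLeft d.toAdd))
  map_one' := by
    ext1 x
    refine DFunLike.congr_fun (f := MulEquiv.toMonoidHom _) (g := MonoidHom.id _) ?_ x
    ext ⟨q, v⟩
    simp
  map_mul' d e := by
    ext1 x
    refine DFunLike.congr_fun (f := MulEquiv.toMonoidHom _)
      (g := (MulEquiv.toMonoidHom _).comp (MulEquiv.toMonoidHom _)) ?_ x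
    ext ⟨q, v⟩
    simp [add_assoc]

theorem transAct_of (d : Multiplicative (κ → ℤ)) (c : Q × (κ → ℤ)) :
    transAct Q κ d (FreeGroup.of c) = FreeGroup.of (c.1, d.toAdd + c.2) := by
  simp [transAct]
  rfl

/-- The semidirect product of the free group on the configurations with the group of translations of
the registers. -/
abbrev ConfGroup (Q κ : Type) : Type :=
  FreeGroup (Q × (κ → ℤ)) ⋊[transAct Q κ] Multiplicative (κ → ℤ)

/-- The multiplication with a vector as an endomorphism of `ℤ^κ`. -/
def scaleHom (m : κ → ℤ) : Multiplicative (κ → ℤ) →* Multiplicative (κ → ℤ) :=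
  AddMonoidHom.toMultiplicative (AddMonoidHom.mulLeft m)

/-- The homomorphism induced by the affine parametrization `z ↦ p + m * z` of configurations with
state `q`. -/
def affHom (q : Q) (p m : κ → ℤ) : ConfGroup Unit κ →* ConfGroup Q κ :=
  SemidirectProduct.map (FreeGroup.map fun c => (q, p + m * c.2)) (scaleHom m) fun d => by
    ext c
    simp [transAct, scaleHom, mul_add, add_left_comm]

theorem affHom_injective (q : Q) {p m : κ → ℤ} (hm : ∀ l, m l ≠ 0) :
    Injective (affHom q p m) := by
  have hinj : ∀ a b : κ → ℤ, m * a = m * b → a = b := by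
    intro a b h
    funext l
    exact mul_left_cancel₀ (hm l) (congrFun h l)
  intro x y hxy
  have h1 := congrArg SemidirectProduct.left hxy
  have h2 := congrArg SemidirectProduct.right hxy
  simp only [affHom, SemidirectProduct.map_left, SemidirectProduct.map_right] at h1 h2
  refine SemidirectProduct.ext (FreeGroup.map_injective (fun c c' h => ?_) h1) ?_
  · exact Prod.ext rfl (hinj _ _ (by simpa using h))
  · exact Multiplicative.toAdd.injective (hinj _ _ (congrArg Multiplicative.toAdd h2))

/-- The retraction of a free group to the subgroup generated by a part of the basis. -/
noncomputable def retract {X : Type} (H : Set X) : FreeGroup X →* FreeGroup X :=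
  open Classical in FreeGroup.lift fun x => if x ∈ H then FreeGroup.of x else 1

theorem retract_map {X Y : Type} (f : X → Y) (H : Set Y) (n : FreeGroup X) :
    retract H (FreeGroup.map f n) = FreeGroup.map f (retract (f ⁻¹' H) n) := by
  refine DFunLike.congr_fun (f := (retract H).comp (FreeGroup.map f))
    (g := (FreeGroup.map f).comp (retract (f ⁻¹' H))) ?_ n
  ext x
  by_cases h : f x ∈ H <;> simp [retract, h]

/-- The subgroup generated by the configurations in `H`, described as the set of fixed points of the
retraction onto it. -/
noncomputable def confSubgroup (H : Set (Q × (κ → ℤ))) : Subgroup (ConfGroup Q κ) :=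
  ((retract H).eqLocus (MonoidHom.id _)).map SemidirectProduct.inl

theorem mem_confSubgroup {H : Set (Q × (κ → ℤ))} {g : ConfGroup Q κ} :
    g ∈ confSubgroup H ↔ retract H g.left = g.left ∧ g.right = 1 := by
  constructor
  · rintro ⟨n, hn, rfl⟩
    exact ⟨hn, rfl⟩
  · rintro ⟨h1, h2⟩
    exact ⟨g.left, h1, SemidirectProduct.ext rfl h2.symm⟩

theorem of_mem_confSubgroup {H : Set (Q × (κ → ℤ))} {c : Q × (κ → ℤ)} :
    SemidirectProduct.inl (FreeGroup.of c) ∈ confSubgroup H ↔ c ∈ H := by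
  rw [mem_confSubgroup]
  by_cases h : c ∈ H
  · simp [retract, h]
  · simp [retract, h, (FreeGroup.of_ne_one c).symm]

/-- The preimage of a subgroup generated by configurations under an affine parametrization is again
generated by configurations. -/
theorem affHom_mem_iff (q : Q) {p m : κ → ℤ} (hm : ∀ l, m l ≠ 0) (H : Set (Q × (κ → ℤ)))
    (g : ConfGroup Unit κ) : affHom q p m g ∈ confSubgroup H ↔
      g ∈ confSubgroup {c : Unit × (κ → ℤ) | (q, p + m * c.2) ∈ H} := by
  rw [mem_confSubgroup, mem_confSubgroup]
  have h1 : g.right = 1 ↔ (affHom q p m g).right = 1 := by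
    constructor
    · intro h
      simp [affHom, h]
    · intro h
      refine Multiplicative.toAdd.injective (funext fun l => mul_left_cancel₀ (hm l) ?_)
      have := congrFun (congrArg Multiplicative.toAdd h) l
      simpa [affHom, scaleHom] using this
  rw [h1]
  refine and_congr_left fun _ => ?_
  simp only [affHom, SemidirectProduct.map_left]
  rw [retract_map]
  refine (FreeGroup.map_injective fun c c' h => ?_).eq_iff
  refine Prod.ext rfl (funext fun l => mul_left_cancel₀ (hm l) ?_)
  simpa using congrFun (Prod.ext_iff.1 h).2 l

/-- If `H` is invariant under the system and contains `c₀`, then the relations hold in a group in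
which the commutator of `k` with every configuration outside of `H` has infinite order.
In an iterated HNN extension `E` of `ConfGroup Q κ`, the stable letters and the configurations in `H`
generate a subgroup `T` containing no further configurations. The relations hold in the permutation
group of `(E ⧸ T) × ℤ`, where `k` shifts the fibre over the trivial coset. -/
theorem AffSys.exists_group [Fintype κ] [Finite I] (M : AffSys Q κ I) (H : Set (Q × (κ → ℤ)))
    (hH : ∀ c c', M.Step c c' → (c ∈ H ↔ c' ∈ H)) (c₀ : Q × (κ → ℤ)) (hc₀ : c₀ ∈ H) :
    ∃ (P : Type) (_ : Group P) (t : Q → P) (ξ : κ → P) (s : I → P) (k : P),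
      M.Rel c₀ t ξ s k ∧ ∀ c ∉ H, Injective fun n : ℤ => ⁅k, conf t ξ c⁆ ^ n := by
  classical
  obtain ⟨E, _, ι, s, hι, hs, hT⟩ := exists_multi_hnn I
    (fun i => affHom (M.src i) (M.p i) (M.m i)) (fun i => affHom (M.tgt i) (M.p' i) (M.m' i))
    (fun i => affHom_injective _ (M.hm i)) (fun i => affHom_injective _ (M.hm' i))
  have hmem := hT (confSubgroup H) fun i g => by
    rw [affHom_mem_iff _ (M.hm i), affHom_mem_iff _ (M.hm' i)]
    have : {c : Unit × (κ → ℤ) | (M.src i, M.p i + M.m i * c.2) ∈ H} =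
        {c : Unit × (κ → ℤ) | (M.tgt i, M.p' i + M.m' i * c.2) ∈ H} := by
      ext c
      exact hH _ _ ⟨i, c.2, rfl, rfl⟩
    rw [this]
  set T := Subgroup.closure (ι '' (confSubgroup H : Set (ConfGroup Q κ)) ∪ Set.range s) with hTdef
  -- the configuration elements inside the semidirect product
  let t₁ : Q → ConfGroup Q κ := fun q => SemidirectProduct.inl (FreeGroup.of (q, 0))
  let ξ₁ : κ → ConfGroup Q κ := fun l =>
    SemidirectProduct.inr (Multiplicative.ofAdd (Pi.single l 1))
  have hxp : ∀ v, xp ξ₁ v = SemidirectProduct.inr (Multiplicative.ofAdd v) := by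
    intro v
    have h1 := map_xp (SemidirectProduct.inr (φ := transAct Q κ))
      (fun l => Multiplicative.ofAdd (Pi.single l (1 : ℤ) : κ → ℤ)) v
    refine h1.symm.trans (congrArg _ ?_)
    rw [xp, Finset.prod_map_toList]
    refine Multiplicative.toAdd.injective ?_
    rw [toAdd_prod]
    funext l
    simp [Finset.sum_apply, Pi.single_apply]
  have hconf : ∀ c, conf t₁ ξ₁ c = SemidirectProduct.inl (FreeGroup.of c) := by
    rintro ⟨q, v⟩
    rw [conf, hxp]
    change SemidirectProduct.inr _ * SemidirectProduct.inl (FreeGroup.of (q, 0)) * _ = _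
    rw [← map_inv, ← SemidirectProduct.inl_aut, transAct_of]
    simp
  -- the action on the cosets of `T`
  let ρ : E →* Equiv.Perm ((E ⧸ T) × ℤ) :=
    { toFun := fun e => Equiv.prodCongr (MulAction.toPerm e) (Equiv.refl ℤ)
      map_one' := by ext x <;> simp
      map_mul' := fun a b => by ext x <;> simp [mul_smul] }
  let b : E ⧸ T := ((1 : E) : E ⧸ T)
  let k : Equiv.Perm ((E ⧸ T) × ℤ) :=
    { toFun := fun x => if x.1 = b then (x.1, x.2 + 1) else x
      invFun := fun x => if x.1 = b then (x.1, x.2 - 1) else x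
      left_inv := fun ⟨x, j⟩ => by by_cases h : x = b <;> simp [h]
      right_inv := fun ⟨x, j⟩ => by by_cases h : x = b <;> simp [h] }
  have hb : ∀ e : E, e • b = b ↔ e ∈ T := by
    intro e
    change ((e * 1 : E) : E ⧸ T) = ((1 : E) : E ⧸ T) ↔ _
    rw [mul_one, eq_comm, QuotientGroup.eq]
    simp
  have hcomm : ∀ e ∈ T, k * ρ e = ρ e * k := by
    intro e he
    ext1 ⟨x, j⟩
    have h1 : e • x = b ↔ x = b := by
      nth_rewrite 1 [← (hb e).2 he]
      exact smul_left_cancel_iff e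
    by_cases hx : x = b
    · simp [k, ρ, hx, (hb e).2 he]
    · simp [k, ρ, h1, hx]
  have hin : ∀ c, ι (conf t₁ ξ₁ c) ∈ T ↔ c ∈ H := by
    intro c
    rw [← of_mem_confSubgroup, hconf]
    exact ⟨hmem _, fun h => Subgroup.subset_closure (Or.inl ⟨_, h, rfl⟩)⟩
  have hrel : ∀ c, ρ (ι (conf t₁ ξ₁ c)) =
      conf (fun q => ρ (ι (t₁ q))) (fun l => ρ (ι (ξ₁ l))) c := by
    intro c
    rw [map_conf, map_conf]
  refine ⟨Equiv.Perm ((E ⧸ T) × ℤ), inferInstance, fun q => ρ (ι (t₁ q)), fun l => ρ (ι (ξ₁ l)),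
    fun i => ρ (s i), k, ⟨fun l l' => ?_, fun i => ?_, fun i l => ?_, fun i => ?_, ?_⟩, ?_⟩
  · have hξ : ξ₁ l * ξ₁ l' = ξ₁ l' * ξ₁ l := by
      change SemidirectProduct.inr _ * SemidirectProduct.inr _ =
        SemidirectProduct.inr _ * SemidirectProduct.inr _
      rw [← MonoidHom.map_mul, ← MonoidHom.map_mul, mul_comm]
    simpa only [map_mul] using congrArg (fun x => ρ (ι x)) hξ
  · rw [← hrel, ← hrel, ← map_mul, ← map_mul, hconf, hconf]
    congr 1
    have := hs i (SemidirectProduct.inl (FreeGroup.of ((), 0)))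
    simpa [affHom] using this
  · have := hs i (SemidirectProduct.inr (Multiplicative.ofAdd (Pi.single l 1)))
    have hz : ∀ m : κ → ℤ, scaleHom m (Multiplicative.ofAdd (Pi.single l 1)) =
        Multiplicative.ofAdd (Pi.single l 1) ^ m l := by
      intro m
      refine Multiplicative.toAdd.injective (funext fun l' => ?_)
      rcases eq_or_ne l' l with rfl | h
      · simp [scaleHom]
      · simp [scaleHom, h]
    simp only [affHom, SemidirectProduct.map_inr, hz, map_zpow] at this
    simpa only [map_mul, map_zpow] using congrArg ρ this
  · exact hcomm _ (Subgroup.subset_closure (Or.inr ⟨i, rfl⟩))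
  · rw [← hrel]
    exact hcomm _ ((hin c₀).2 hc₀)
  · intro c hc
    rw [← hrel]
    set e := ι (conf t₁ ξ₁ c)
    have he : e⁻¹ • b ≠ b := fun h => hc ((hin c).1 (by simpa using (hb _).1 h))
    have hk : ∀ j : ℤ, ⁅k, ρ e⁆ (b, j) = (b, j + 1) := by
      intro j
      have h1 : (ρ e)⁻¹ (b, j) = (e⁻¹ • b, j) := by
        rw [← map_inv]; rfl
      have h2 : k⁻¹ (e⁻¹ • b, j) = (e⁻¹ • b, j) := by
        rw [Equiv.Perm.inv_eq_iff_eq]; simp [k, he]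
      have h3 : ρ e (e⁻¹ • b, j) = (b, j) := by simp [ρ]
      rw [commutatorElement_def]
      simp only [Equiv.Perm.mul_apply]
      rw [h1, h2, h3]; simp [k]
    have hk' : ∀ n : ℤ, (⁅k, ρ e⁆ ^ n) (b, 0) = (b, n) := by
      intro n
      induction n with
      | zero => rfl
      | succ n ih => rw [add_comm, zpow_one_add, Equiv.Perm.mul_apply, ih, hk, add_comm]
      | pred n ih =>
        rw [sub_eq_add_neg, add_comm, zpow_add, Equiv.Perm.mul_apply, ih, zpow_neg_one,
          Equiv.Perm.inv_eq_iff_eq, hk]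
        congr 1; ring
    intro n n' h
    have := congrArg (fun f : Equiv.Perm ((E ⧸ T) × ℤ) => f (b, 0)) h
    simpa [hk'] using this

end IsoClass

/-! ### Relators which are trivializing or not depending on a configuration -/

namespace IsoClass
open Function
open scoped commutatorElement

/-- The letters of the simulating group together with the extra letter of infinite order
(`inr (inr (inr false))`); the letter `k` is `inr (inr (inr true))`. -/
abbrev BaseGen (Q κ I : Type) : Type := Q ⊕ κ ⊕ I ⊕ Bool

/-- All generators: the base letters, the letters `u x b` of `RabinRel`, and its letters `v`, `s`, `w`,
in this order. -/
abbrev Gen (Q κ I : Type) : Type := BaseGen Q κ I ⊕ (BaseGen Q κ I × Bool) ⊕ Fin 3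

/-- Every base letter times the extra letter, and the extra letter itself. These elements generate the
same group as the base letters, and they have infinite order when the extra letter spans a direct
factor. -/
def baseElt {Q κ I P : Type} [Group P] (f : BaseGen Q κ I → P) : BaseGen Q κ I → P
  | .inr (.inr (.inr false)) => f (.inr (.inr (.inr false)))
  | x => f x * f (.inr (.inr (.inr false)))

/-- The relations imposed on the generators, except for the one which determines `w`. -/
structure GenRel {Q κ I P : Type} [Fintype κ] [Group P] (M : AffSys Q κ I) (c₀ : Q × (κ → ℤ))
    (f : Gen Q κ I → P) : Prop where
  aff : M.Rel c₀ (fun q => f (.inl (.inl q))) (fun l => f (.inl (.inr (.inl l))))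
    (fun i => f (.inl (.inr (.inr (.inl i))))) (f (.inl (.inr (.inr (.inr true)))))
  rabin : RabinRel (baseElt fun x => f (.inl x)) (f (.inr (.inr 2)))
    (fun x b => f (.inr (.inl (x, b)))) (f (.inr (.inr 0))) (f (.inr (.inr 1)))

theorem map_baseElt {Q κ I P P' : Type} [Group P] [Group P'] (g : P →* P')
    (f : BaseGen Q κ I → P) (x : BaseGen Q κ I) :
    g (baseElt f x) = baseElt (fun x => g (f x)) x := by
  rcases x with q | l | i | (_ | _) <;> simp [baseElt]

/-- The relations amount to finitely many relators. -/
theorem exists_relators {Q κ I : Type} [Fintype κ] [Finite Q] [Finite I] (M : AffSys Q κ I)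
    (c₀ : Q × (κ → ℤ)) : ∃ R : Set (FreeGroup (Gen Q κ I)), R.Finite ∧
      ∀ (P : Type) [Group P] (φ : FreeGroup (Gen Q κ I) →* P),
        (∀ r ∈ R, φ r = 1) ↔ GenRel M c₀ fun x => φ (FreeGroup.of x) := by
  let f : Gen Q κ I → FreeGroup (Gen Q κ I) := FreeGroup.of
  let t := fun q => f (.inl (.inl q))
  let ξ := fun l => f (.inl (.inr (.inl l)))
  let s := fun i => f (.inl (.inr (.inr (.inl i))))
  let k := f (.inl (.inr (.inr (.inr true))))
  let y := baseElt fun x => f (.inl x)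
  let u := fun x b => f (.inr (.inl (x, b)))
  let v := f (.inr (.inr 0))
  let z := f (.inr (.inr 1))
  let w := f (.inr (.inr 2))
  let eqs : Set (FreeGroup (Gen Q κ I) × FreeGroup (Gen Q κ I)) :=
    (Set.range fun l : κ × κ => (ξ l.1 * ξ l.2, ξ l.2 * ξ l.1)) ∪
    (Set.range fun i => (s i * conf t ξ (M.src i, M.p i), conf t ξ (M.tgt i, M.p' i) * s i)) ∪
    (Set.range fun l : I × κ => (s l.1 * ξ l.2 ^ M.m l.1 l.2, ξ l.2 ^ M.m' l.1 l.2 * s l.1)) ∪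
    (Set.range fun i => (k * s i, s i * k)) ∪
    {(k * conf t ξ c₀, conf t ξ c₀ * k)} ∪
    (Set.range fun x : BaseGen Q κ I × Bool =>
      (u x.1 x.2 * y x.1, y x.1 ^ 2 * u x.1 x.2)) ∪
    (Set.range fun x => (v * u x false, u x false * u x true * v)) ∪
    (Set.range fun x => (v * u x true, u x false * v)) ∪
    {(z * v, v ^ 2 * z), (w * z, z ^ 2 * w)}
  have hfin : eqs.Finite := by
    simp only [eqs, Set.finite_union]
    simp [Set.finite_range]
  refine ⟨(fun e => e.1 * e.2⁻¹) '' eqs, hfin.image _, fun P _ φ => ?_⟩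
  have hb : ∀ x, φ (baseElt (fun x => f (.inl x)) x) = baseElt (fun x => φ (f (.inl x))) x :=
    map_baseElt φ _
  rw [Set.forall_mem_image]
  simp only [map_mul, map_inv, mul_inv_eq_one]
  constructor
  · intro h
    simp only [eqs, Set.mem_union, or_imp, forall_and, Set.forall_mem_range,
      Set.mem_singleton_iff, Set.mem_insert_iff, forall_eq] at h
    obtain ⟨⟨⟨⟨⟨⟨⟨⟨h1, h2⟩, h3⟩, h4⟩, h5⟩, h6⟩, h7⟩, h8⟩, h9, h10⟩ := h
    simp only [map_mul, map_zpow, map_pow, map_conf, t, ξ, s, k, y, u, v, z, w, hb, f] at *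
    exact ⟨⟨fun l l' => h1 (l, l'), h2, fun i l => h3 (i, l), h4, h5⟩,
      ⟨fun x b => h6 (x, b), h7, h8, h9, h10⟩⟩
  · rintro ⟨⟨h1, h2, h3, h4, h5⟩, ⟨h6, h7, h8, h9, h10⟩⟩
    simp only [eqs, Set.mem_union, or_imp, forall_and, Set.forall_mem_range,
      Set.mem_singleton_iff, Set.mem_insert_iff, forall_eq]
    simp only [map_mul, map_zpow, map_pow, map_conf, t, ξ, s, k, y, u, v, z, w, hb, f]
    exact ⟨⟨⟨⟨⟨⟨⟨⟨fun l => h1 l.1 l.2, h2⟩, fun l => h3 l.1 l.2⟩, h4⟩, h5⟩, fun x => h6 x.1 x.2⟩,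
      h7⟩, h8⟩, h9, h10⟩

/-- When `w = 1`, all generators are trivial. -/
theorem GenRel.trivial {Q κ I P : Type} [Fintype κ] [Group P] {M : AffSys Q κ I}
    {c₀ : Q × (κ → ℤ)} {f : Gen Q κ I → P} (h : GenRel M c₀ f) (hw : f (.inr (.inr 2)) = 1) :
    ∀ x, f x = 1 := by
  obtain ⟨h1, h2, h3, h4⟩ := h.rabin.trivial hw
  have hb : f (.inl (.inr (.inr (.inr false)))) = 1 := h4 (.inr (.inr (.inr false)))
  rintro (x | ⟨x, b⟩ | j)
  · have := h4 x
    rcases x with q | l | i | (_ | _) <;> first | exact hb | simpa [baseElt, hb] using this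
  · exact h3 x b
  · fin_cases j
    exacts [h2, h1, hw]

/-- The relator which identifies `w` with the commutator of `k` and a configuration. -/
def lastRel {F : Type} [Group F] (k t ξ w : F) (n : ℕ) : F :=
  ⁅k, ξ ^ n * t * (ξ ^ n)⁻¹⁆ * w⁻¹

theorem conf_single {Q κ P : Type} [Fintype κ] [DecidableEq κ] [Group P] (t : Q → P) (ξ : κ → P)
    (q : Q) (l : κ) (n : ℕ) :
    conf t ξ (q, Pi.single l (n : ℤ)) = ξ l ^ n * t q * (ξ l ^ n)⁻¹ := by
  simp only [conf]
  rw [xp_single, zpow_natCast]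

/-- There is a finite family of relators and a sequence of single further relators such that the
resulting groups are trivial for those `n` for which the configuration `(q, n)` is connected to `c₀`,
and have infinite quotients for the other `n`. -/
theorem exists_relator_family {Q κ I : Type} [Fintype κ] [DecidableEq κ] [Finite Q] [Finite I]
    (M : AffSys Q κ I) (c₀ : Q × (κ → ℤ)) (q : Q) (l : κ) :
    ∃ (X : Type) (_ : Finite X) (R : Set (FreeGroup X)) (k t ξ w : FreeGroup X),
      Nonempty X ∧ R.Finite ∧
      (∀ n : ℕ, Relation.EqvGen M.Step c₀ (q, Pi.single l (n : ℤ)) →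
        ∀ (P : Type) [Group P] (φ : FreeGroup X →* P), (∀ r ∈ R, φ r = 1) →
          φ (lastRel k t ξ w n) = 1 → ∀ x, φ x = 1) ∧
      (∀ n : ℕ, ¬ Relation.EqvGen M.Step c₀ (q, Pi.single l (n : ℤ)) →
        ∃ (A : Type) (_ : Group A) (_ : Infinite A) (φ : FreeGroup X →* A), Surjective φ ∧
          (∀ r ∈ R, φ r = 1) ∧ φ (lastRel k t ξ w n) = 1) := by
  obtain ⟨R, hfin, hR⟩ := exists_relators M c₀
  refine ⟨Gen Q κ I, inferInstance, R, FreeGroup.of (.inl (.inr (.inr (.inr true)))),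
    FreeGroup.of (.inl (.inl q)), FreeGroup.of (.inl (.inr (.inl l))),
    FreeGroup.of (.inr (.inr 2)), ⟨.inr (.inr 2)⟩, hfin, ?_, ?_⟩
  · intro n hn P _ φ hφ hlast x
    have h := (hR P φ).1 hφ
    have hc := (h.aff.commute hn).commutator_eq
    rw [conf_single] at hc
    have hw : φ (FreeGroup.of (.inr (.inr 2))) = 1 := by
      simp only [lastRel, map_mul, map_inv, map_commutatorElement, map_pow] at hlast
      rw [hc, one_mul, inv_eq_one] at hlast
      exact hlast
    have h1 := h.trivial hw
    have : φ = 1 := by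
      ext y
      exact h1 y
    rw [this]; rfl
  · intro n hn
    obtain ⟨P₀, _, t, ξ, s, k, hrel, hinf⟩ := M.exists_group {c | Relation.EqvGen M.Step c₀ c}
      (fun c c' h => ⟨fun h' => h'.trans _ _ _ (.rel _ _ h),
        fun h' => h'.trans _ _ _ (.symm _ _ (.rel _ _ h))⟩) c₀ (.refl _)
    replace hinf := hinf _ hn
    -- the extra letter generates a direct factor, so that all `baseElt` have infinite order
    let P := P₀ × Multiplicative ℤ
    let j : P₀ →* P := MonoidHom.inl _ _
    let f : BaseGen Q κ I → P
      | .inl q => j (t q)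
      | .inr (.inl l) => j (ξ l)
      | .inr (.inr (.inl i)) => j (s i)
      | .inr (.inr (.inr true)) => j k
      | .inr (.inr (.inr false)) => (1, Multiplicative.ofAdd 1)
    have hrel' := hrel.map j
    let w : P := ⁅j k, conf (fun q => j (t q)) (fun l => j (ξ l)) (q, Pi.single l (n : ℤ))⁆
    have hw : w = j ⁅k, conf t ξ (q, Pi.single l (n : ℤ))⁆ := by
      simp only [w, map_commutatorElement, map_conf]
    have hw' : Injective fun m : ℤ => w ^ m := by
      intro a b h
      simp only [hw, ← map_zpow] at h
      exact hinf (congrArg Prod.fst h)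
    have hsnd : ∀ x, (baseElt f x).2 = Multiplicative.ofAdd 1 := by
      rintro (q | l | i | (_ | _))
      all_goals first | exact one_mul _ | rfl
    have hy : ∀ x, Injective fun m : ℤ => baseElt f x ^ m := by
      intro x a b h
      have h2 := congrArg (MonoidHom.snd P₀ (Multiplicative ℤ)) h
      simp only [map_zpow, MonoidHom.coe_snd, hsnd] at h2
      simpa using congrArg Multiplicative.toAdd h2
    obtain ⟨E, _, ι, u, v, z, hι, hrab⟩ := exists_rabin (baseElt f) w hy hw'
    let g : Gen Q κ I → E
      | .inl x => ι (f x)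
      | .inr (.inl (x, b)) => u x b
      | .inr (.inr 0) => v
      | .inr (.inr 1) => z
      | .inr (.inr 2) => ι w
    let φ : FreeGroup (Gen Q κ I) →* E := FreeGroup.lift g
    have hφ : ∀ r ∈ R, φ r = 1 := by
      refine (hR E φ).2 ?_
      simp only [φ, FreeGroup.lift_apply_of]
      refine ⟨hrel'.map ι, ?_⟩
      have hb : (baseElt fun x => ι (f x)) = fun x => ι (baseElt f x) :=
        funext fun x => (map_baseElt ι f x).symm
      change RabinRel (baseElt fun x => ι (f x)) (ι w) u v z
      rw [hb]
      exact hrab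
    refine ⟨φ.range, inferInstance, ?_, φ.rangeRestrict, φ.rangeRestrict_surjective, ?_, ?_⟩
    · refine Infinite.of_injective
        (fun m : ℤ => (φ.rangeRestrict (FreeGroup.of (.inr (.inr 2)))) ^ m) fun a b h => ?_
      have := congrArg Subtype.val h
      simp only [SubgroupClass.coe_zpow, MonoidHom.coe_rangeRestrict, φ, FreeGroup.lift_apply_of]
        at this
      change (ι w) ^ a = (ι w) ^ b at this
      rw [← map_zpow, ← map_zpow] at this
      exact hw' (hι this)
    · intro r hr
      exact Subtype.ext (hφ r hr)
    · refine Subtype.ext ?_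
      rw [MonoidHom.coe_rangeRestrict]
      simp only [lastRel, map_mul, map_inv, map_commutatorElement, map_pow, φ,
        FreeGroup.lift_apply_of]
      change ⁅ι (j k), ι (j (ξ l)) ^ n * ι (j (t q)) * (ι (j (ξ l)) ^ n)⁻¹⁆ * (ι w)⁻¹ = 1
      rw [mul_inv_eq_one]
      simp only [w, conf_single, map_commutatorElement, map_mul, map_inv, map_pow]

end IsoClass

/-! ### Simulation of stack machines by affine systems -/

namespace IsoClass
open Function

section StackMachine
variable {Q κ : Type}

/-- A deterministic machine with stacks over the digits `1, 2, 3, 4`, where the stack with top `a`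
and rest `L` is represented by the number `a + 5 * L` and the empty stack by `0`. In a step,
the stack represented by `d + 5 * z` with `d : Fin 5` is replaced by `(act ..).1 + (act ..).2 * z`. -/
structure StackSys (Q κ : Type) where
  next : Q → (κ → Fin 5) → Q
  act : Q → (κ → Fin 5) → κ → ℤ × ℤ
  act_ne : ∀ q ρ l, (act q ρ l).2 ≠ 0

/-- The last base `5` digit. -/
def lastDigit (x : ℤ) : Fin 5 := ⟨(x % 5).toNat, by omega⟩

theorem coe_lastDigit (x : ℤ) : ((lastDigit x : ℕ) : ℤ) = x % 5 := by
  simp only [lastDigit]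
  omega

theorem lastDigit_add_mul (d : Fin 5) (z : ℤ) : lastDigit (d + 5 * z) = d := by
  have := d.2
  ext
  simp only [lastDigit]
  omega

/-- The step function of a stack machine. -/
def StackSys.run (A : StackSys Q κ) (c : Q × (κ → ℤ)) : Q × (κ → ℤ) :=
  (A.next c.1 fun l => lastDigit (c.2 l),
    fun l => (A.act c.1 (fun l => lastDigit (c.2 l)) l).1 +
      (A.act c.1 (fun l => lastDigit (c.2 l)) l).2 * (c.2 l / 5))

/-- A stack machine as a system of affine instructions, one for each state and each vector of last
digits. -/
def StackSys.toAff (A : StackSys Q κ) : AffSys Q κ (Q × (κ → Fin 5)) where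
  src i := i.1
  tgt i := A.next i.1 i.2
  p i l := (i.2 l : ℕ)
  p' i l := (A.act i.1 i.2 l).1
  m _ _ := 5
  m' i l := (A.act i.1 i.2 l).2
  hm _ _ := by norm_num
  hm' i l := A.act_ne _ _ _

theorem StackSys.step_iff (A : StackSys Q κ) (c c' : Q × (κ → ℤ)) :
    A.toAff.Step c c' ↔ A.run c = c' := by
  constructor
  · rintro ⟨⟨q, ρ⟩, z, rfl, rfl⟩
    have h : ∀ l, lastDigit ((ρ l : ℕ) + 5 * z l) = ρ l := fun l => lastDigit_add_mul _ _
    have h' : ∀ l, (((ρ l : ℕ) : ℤ) + 5 * z l) / 5 = z l := fun l => by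
      have := (ρ l).2
      omega
    simp only [run, toAff, Pi.add_apply, Pi.mul_apply, h, h']
    rfl
  · rintro rfl
    refine ⟨(c.1, fun l => lastDigit (c.2 l)), fun l => c.2 l / 5, ?_, rfl⟩
    refine Prod.ext rfl (funext fun l => ?_)
    simp only [toAff, Pi.add_apply, Pi.mul_apply, coe_lastDigit]
    omega

/-- Since the machine is deterministic, a configuration is connected to a fixed point only if it
runs into the fixed point. -/
theorem StackSys.eqvGen_iff (A : StackSys Q κ) {c₀ : Q × (κ → ℤ)} (h₀ : A.run c₀ = c₀)
    (c : Q × (κ → ℤ)) : Relation.EqvGen A.toAff.Step c₀ c ↔ ∃ n, A.run^[n] c = c₀ := by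
  constructor
  · intro h
    have key : ∀ c c', Relation.EqvGen A.toAff.Step c c' →
        ((∃ n, A.run^[n] c = c₀) ↔ ∃ n, A.run^[n] c' = c₀) := by
      intro c c' h
      induction h with
      | rel c c' h =>
        rw [A.step_iff] at h
        subst h
        constructor
        · rintro ⟨n, hn⟩
          refine ⟨n, ?_⟩
          rw [← iterate_succ_apply, iterate_succ_apply', hn, h₀]
        · rintro ⟨n, hn⟩
          exact ⟨n + 1, hn⟩
      | refl => rfl
      | symm _ _ _ ih => exact ih.symm
      | trans _ _ _ _ _ ih1 ih2 => exact ih1.trans ih2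
    exact (key _ _ h).1 ⟨0, rfl⟩
  · rintro ⟨n, hn⟩
    refine .symm _ _ ?_
    subst hn
    clear h₀
    induction n generalizing c with
    | zero => exact .refl _
    | succ n ih => exact (Relation.EqvGen.rel _ _ ((A.step_iff _ _).2 rfl)).trans _ _ _ (ih _)

/-- The restriction of a stack machine to an invariant set of states. -/
def StackSys.restrict (A : StackSys Q κ) (s : Set Q) (hs : ∀ q ∈ s, ∀ ρ, A.next q ρ ∈ s) :
    StackSys s κ where
  next q ρ := ⟨A.next q ρ, hs q q.2 ρ⟩
  act q := A.act q
  act_ne q := A.act_ne q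

theorem StackSys.restrict_run (A : StackSys Q κ) (s : Set Q) (hs : ∀ q ∈ s, ∀ ρ, A.next q ρ ∈ s)
    (n : ℕ) (c : s × (κ → ℤ)) : Prod.map Subtype.val id ((A.restrict s hs).run^[n] c) =
      A.run^[n] (Prod.map Subtype.val id c) := by
  induction n generalizing c with
  | zero => rfl
  | succ n ih => rw [iterate_succ_apply, ih]; rfl

end StackMachine

open Turing Turing.PartrecToTM2

instance : Fintype K' := ⟨{.main, .rev, .aux, .stack}, by rintro (_ | _ | _ | _) <;> simp⟩

/-- The digits which represent the stack letters. -/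
def digit : Γ' → Fin 5
  | .consₗ => 1
  | .cons => 2
  | .bit0 => 3
  | .bit1 => 4

/-- The letter represented by a digit; the digit `0` represents the bottom of the stack. -/
def letter (d : Fin 5) : Option Γ' :=
  ![none, some .consₗ, some .cons, some .bit0, some .bit1] d

theorem letter_digit (a : Γ') : letter (digit a) = some a := by
  cases a <;> rfl

theorem digit_ne_zero (a : Γ') : digit a ≠ 0 := by
  cases a <;> decide

/-- The number which represents a stack. -/
def stackNum : List Γ' → ℕ
  | [] => 0
  | a :: L => digit a + 5 * stackNum L

theorem lastDigit_stackNum_nil : lastDigit (stackNum []) = 0 := rfl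

theorem lastDigit_stackNum_cons (a : Γ') (L : List Γ') :
    lastDigit (stackNum (a :: L)) = digit a := by
  simpa [stackNum] using lastDigit_add_mul (digit a) (stackNum L)

theorem stackNum_cons_div (a : Γ') (L : List Γ') :
    (stackNum (a :: L) : ℤ) / 5 = stackNum L := by
  have := (digit a).2
  simp only [stackNum]
  omega

theorem letter_lastDigit (L : List Γ') : letter (lastDigit (stackNum L)) = L.head? := by
  cases L with
  | nil => rfl
  | cons a L => rw [lastDigit_stackNum_cons, letter_digit]; rfl

/-- The instructions of the stack machines to be simulated. -/
abbrev TStmt : Type := TM2.Stmt (fun _ : K' => Γ') Λ' (Option Γ' : Type)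

/-- The configurations of the stack machines to be simulated. -/
abbrev TCfg : Type := TM2.Cfg (fun _ : K' => Γ') Λ' (Option Γ' : Type)

/-- The states of the simulation: the remaining part of the current instruction and the local
variable, or `none` after halting. -/
abbrev TState : Type := Option (TStmt × Option Γ' : Type)

/-- The transition of the states. -/
def tNext (M : Λ' → TStmt) : TState → (K' → Fin 5) → TState
  | none, _ => none
  | some (.push _ _ q, v), _ => some (q, v)
  | some (.peek k f q, v), ρ => some (q, f v (letter (ρ k)))
  | some (.pop k f q, v), ρ => some (q, f v (letter (ρ k)))
  | some (.load f q, v), _ => some (q, f v)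
  | some (.branch f q₁ q₂, v), _ => some (cond (f v) q₁ q₂, v)
  | some (.goto f, v), _ => some (M (f v), v)
  | some (.halt, _), _ => none

/-- The action on the stacks. The branch `(ρ l, 5)` leaves a stack unchanged. After halting, the
stacks are erased digit by digit. -/
def tAct : TState → (K' → Fin 5) → K' → ℤ × ℤ
  | none, _, _ => (0, 1)
  | some (.push k f _, v), ρ, l =>
    if l = k then ((digit (f v) : ℕ) + 5 * (ρ l : ℕ), 25) else ((ρ l : ℕ), 5)
  | some (.pop k _ _, _), ρ, l => if l = k ∧ ρ l ≠ 0 then (0, 1) else ((ρ l : ℕ), 5)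
  | _, ρ, l => ((ρ l : ℕ), 5)

/-- The simulation of a stack machine, executing one elementary operation at a time. -/
def tSys (M : Λ' → TStmt) : StackSys TState K' where
  next := tNext M
  act := tAct
  act_ne q ρ l := by
    rcases q with _ | ⟨q, v⟩
    · norm_num [tAct]
    · cases q <;> simp only [tAct] <;> (try split_ifs) <;> norm_num

/-- The encoding of configurations. -/
def tCfg (M : Λ' → TStmt) (c : TCfg) : TState × (K' → ℤ) :=
  (c.l.map fun l => (M l, c.var), fun k => stackNum (c.stk k))

theorem tSys_run_same (M : Λ' → TStmt) (q : TState) (V : K' → ℤ)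
    (h : ∀ ρ l, tAct q ρ l = (((ρ l : ℕ) : ℤ), 5)) :
    (tSys M).run (q, V) = (tNext M q fun l => lastDigit (V l), V) := by
  refine Prod.ext rfl (funext fun l => ?_)
  simp only [StackSys.run, tSys, h, coe_lastDigit]
  omega

theorem tSys_run_push (M : Λ' → TStmt) (k : K') (f : Option Γ' → Γ') (q : TStmt) (v : Option Γ')
    (S : K' → List Γ') :
    (tSys M).run (some (.push k f q, v), fun l => (stackNum (S l) : ℤ)) =
      (some (q, v), fun l => (stackNum (update S k (f v :: S k) l) : ℤ)) := by
  refine Prod.ext rfl (funext fun l => ?_)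
  simp only [StackSys.run, tSys, tAct]
  rcases eq_or_ne l k with rfl | h
  · simp only [if_true, update_self, stackNum, coe_lastDigit]
    push_cast
    omega
  · simp only [h, if_false, update_of_ne h, coe_lastDigit]
    omega

theorem tSys_run_pop (M : Λ' → TStmt) (k : K') (f : Option Γ' → Option Γ' → Option Γ') (q : TStmt)
    (v : Option Γ') (S : K' → List Γ') :
    (tSys M).run (some (.pop k f q, v), fun l => (stackNum (S l) : ℤ)) =
      (some (q, f v (S k).head?), fun l => (stackNum (update S k (S k).tail l) : ℤ)) := by
  refine Prod.ext ?_ (funext fun l => ?_)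
  · simp only [StackSys.run, tSys, tNext, letter_lastDigit]
  · simp only [StackSys.run, tSys, tAct]
    rcases eq_or_ne l k with rfl | h
    · rcases hS : S l with _ | ⟨a, L⟩
      · simp [stackNum, lastDigit]
      · simp [lastDigit_stackNum_cons, digit_ne_zero, stackNum_cons_div]
    · simp only [h, false_and, if_false, update_of_ne h, coe_lastDigit]
      omega

/-- A step of the stack machine is simulated by a positive number of steps. -/
theorem tSys_stepAux (M : Λ' → TStmt) (q : TStmt) (v : Option Γ') (S : K' → List Γ') :
    ∃ n, (tSys M).run^[n + 1] (some (q, v), fun l => (stackNum (S l) : ℤ)) =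
      tCfg M (TM2.stepAux q v S) := by
  induction q generalizing v S with
  | push k f q ih =>
    obtain ⟨n, hn⟩ := ih v (update S k (f v :: S k))
    exact ⟨n + 1, by rw [iterate_succ_apply, tSys_run_push, hn]; rfl⟩
  | peek k f q ih =>
    obtain ⟨n, hn⟩ := ih (f v (S k).head?) S
    refine ⟨n + 1, ?_⟩
    rw [iterate_succ_apply, tSys_run_same _ _ _ fun _ _ => rfl]
    simp only [tNext, letter_lastDigit]
    exact hn
  | pop k f q ih =>
    obtain ⟨n, hn⟩ := ih (f v (S k).head?) (update S k (S k).tail)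
    exact ⟨n + 1, by rw [iterate_succ_apply, tSys_run_pop, hn]; rfl⟩
  | load f q ih =>
    obtain ⟨n, hn⟩ := ih (f v) S
    refine ⟨n + 1, ?_⟩
    rw [iterate_succ_apply, tSys_run_same _ _ _ fun _ _ => rfl]
    exact hn
  | branch f q₁ q₂ ih₁ ih₂ =>
    have : ∃ n, (tSys M).run^[n + 1] (some (cond (f v) q₁ q₂, v), fun l => (stackNum (S l) : ℤ)) =
        tCfg M (TM2.stepAux (.branch f q₁ q₂) v S) := by
      simp only [TM2.stepAux]
      cases f v
      exacts [ih₂ v S, ih₁ v S]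
    obtain ⟨n, hn⟩ := this
    refine ⟨n + 1, ?_⟩
    rw [iterate_succ_apply, tSys_run_same _ _ _ fun _ _ => rfl]
    exact hn
  | goto f =>
    refine ⟨0, ?_⟩
    rw [iterate_succ_apply, tSys_run_same _ _ _ fun _ _ => rfl]
    rfl
  | halt =>
    refine ⟨0, ?_⟩
    rw [iterate_succ_apply, tSys_run_same _ _ _ fun _ _ => rfl]
    rfl

theorem tSys_run_none (M : Λ' → TStmt) (V : K' → ℤ) :
    (tSys M).run (none, V) = (none, fun l => V l / 5) := by
  refine Prod.ext rfl (funext fun l => ?_)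
  simp [StackSys.run, tSys, tAct]

/-- After halting, the stacks get erased. -/
theorem tSys_erase (M : Λ' → TStmt) (V : K' → ℕ) :
    ∃ n, (tSys M).run^[n] (none, fun l => (V l : ℤ)) = (none, 0) := by
  have key : ∀ (n : ℕ) (V : K' → ℕ), (∀ l, V l ≤ n) →
      (tSys M).run^[n] (none, fun l => (V l : ℤ)) = (none, 0) := by
    intro n
    induction n with
    | zero =>
      intro V h
      refine Prod.ext rfl (funext fun l => ?_)
      simpa using h l
    | succ n ih =>
      intro V h
      rw [iterate_succ_apply, tSys_run_none]
      have := ih (fun l => V l / 5) fun l => by have := h l; omega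
      rw [← this]
      push_cast
      rfl
  exact ⟨∑ l, V l, key _ V fun l => Finset.single_le_sum (fun _ _ => Nat.zero_le _)
    (Finset.mem_univ l)⟩

/-- The machine halts if and only if the simulation reaches the final configuration. -/
theorem tSys_halts (M : Λ' → TStmt) (c : TCfg) :
    (StateTransition.eval (TM2.step M) c).Dom ↔ ∃ n, (tSys M).run^[n] (tCfg M c) = (none, 0) := by
  have hstep : ∀ b b', b' ∈ TM2.step M b → ∃ n, (tSys M).run^[n + 1] (tCfg M b) = tCfg M b' := by
    rintro ⟨_ | l, v, S⟩ b' h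
    · simp [TM2.step] at h
    · obtain rfl : TM2.stepAux (M l) v S = b' := by simpa [TM2.step] using h
      exact tSys_stepAux M (M l) v S
  have hnone : ∀ b : TCfg, TM2.step M b = none ↔ b.l = none := by
    rintro ⟨_ | l, v, S⟩ <;> simp [TM2.step]
  constructor
  · intro h
    obtain ⟨h1, h2⟩ := StateTransition.mem_eval.1 (Part.get_mem h)
    generalize (StateTransition.eval (TM2.step M) c).get h = b at h1 h2
    have h3 : ∃ n, (tSys M).run^[n] (tCfg M c) = tCfg M b := by
      clear h2
      induction h1 with
      | refl => exact ⟨0, rfl⟩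
      | tail _ hs ih =>
        obtain ⟨n, hn⟩ := ih
        obtain ⟨n', hn'⟩ := hstep _ _ hs
        exact ⟨n' + 1 + n, by rw [iterate_add_apply, hn, hn']⟩
    obtain ⟨n, hn⟩ := h3
    obtain ⟨n', hn'⟩ := tSys_erase M fun k => stackNum (b.stk k)
    refine ⟨n' + n, ?_⟩
    rw [iterate_add_apply, hn, ← hn']
    rw [hnone] at h2
    simp [tCfg, h2]
  · rintro ⟨m, hm⟩
    by_contra hd
    have key : ∀ i, ∃ n ≥ i, ∃ b, StateTransition.Reaches (TM2.step M) c b ∧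
        (tSys M).run^[n] (tCfg M c) = tCfg M b := by
      intro i
      induction i with
      | zero => exact ⟨0, le_rfl, c, .refl, rfl⟩
      | succ i ih =>
        obtain ⟨n, hn, b, hb, hr⟩ := ih
        cases hs : TM2.step M b with
        | none => exact absurd (Part.dom_iff_mem.2 ⟨b, StateTransition.mem_eval.2 ⟨hb, hs⟩⟩) hd
        | some b' =>
          obtain ⟨n', hn'⟩ := hstep b b' hs
          exact ⟨n' + 1 + n, by omega, b', hb.tail hs, by rw [iterate_add_apply, hr, hn']⟩
    obtain ⟨n, hn, b, hb, hr⟩ := key m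
    have hfix : (tSys M).run (none, 0) = (none, 0) := by
      rw [tSys_run_none]
      simp
      rfl
    rw [← Nat.sub_add_cancel hn, iterate_add_apply, hm, iterate_fixed hfix] at hr
    have hl : b.l = none := by simpa [tCfg] using (congrArg Prod.fst hr).symm
    exact hd (Part.dom_iff_mem.2 ⟨b, StateTransition.mem_eval.2 ⟨hb, (hnone b).2 hl⟩⟩)

/-- The states which occur in the evaluation of a code form a finite set. -/
def tStates (M : Λ' → TStmt) (S : Finset Λ') : Set TState :=
  {x | ∀ y ∈ x, some y.1 ∈ TM2.stmts M S}

theorem finite_tStates (M : Λ' → TStmt) (S : Finset Λ') : (tStates M S).Finite := by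
  have : (tStates M S) ⊆ insert none
      ((fun y : Option TStmt × Option Γ' => y.1.map fun q => (q, y.2)) ''
        ((TM2.stmts M S : Set (Option TStmt)) ×ˢ Set.univ)) := by
    rintro (_ | ⟨q, v⟩) h
    · exact Or.inl rfl
    · exact Or.inr ⟨(some q, v), ⟨h _ rfl, trivial⟩, rfl⟩
  exact Set.Finite.subset
    (((((TM2.stmts M S).finite_toSet.prod Set.finite_univ)).image _).insert _) this

theorem some_mem_tStates (M : Λ' → TStmt) {S : Finset Λ'} {l : Λ'} (hl : l ∈ S) (v : Option Γ') :
    some (M l, v) ∈ tStates M S := by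
  rintro y ⟨⟩
  simp only [TM2.stmts, Finset.some_mem_insertNone, Finset.mem_biUnion]
  exact ⟨l, hl, TM2.stmts₁_self⟩

theorem tNext_mem (M : Λ' → TStmt) (S : Finset Λ') (hS : ∀ l ∈ S, TM2.SupportsStmt S (M l))
    (x : TState) (hx : x ∈ tStates M S) (ρ : K' → Fin 5) : tNext M x ρ ∈ tStates M S := by
  rcases x with _ | ⟨q, v⟩
  · exact hx
  have hq : some q ∈ TM2.stmts M S := hx _ rfl
  have hsub : ∀ q', q' ∈ TM2.stmts₁ q → ∀ v', some (q', v') ∈ tStates M S := by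
    rintro q' hq' v' _ ⟨⟩
    exact TM2.stmts_trans hq' hq
  cases q with
  | halt => rintro y ⟨⟩
  | goto f =>
    rintro y ⟨⟩
    have h1 : TM2.SupportsStmt S (TM2.Stmt.goto f : TStmt) := by
      simp only [TM2.stmts, Finset.some_mem_insertNone, Finset.mem_biUnion] at hq
      obtain ⟨l, hl, hl'⟩ := hq
      exact TM2.stmts₁_supportsStmt_mono hl' (hS l hl)
    simp only [TM2.stmts, Finset.some_mem_insertNone, Finset.mem_biUnion]
    exact ⟨f v, h1 v, TM2.stmts₁_self⟩
  | branch f q₁ q₂ =>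
    refine hsub _ ?_ _
    simp only [TM2.stmts₁, Finset.mem_insert, Finset.mem_union]
    cases f v
    exacts [Or.inr (Or.inr TM2.stmts₁_self), Or.inr (Or.inl TM2.stmts₁_self)]
  | _ =>
    refine hsub _ ?_ _
    simp only [TM2.stmts₁, Finset.mem_insert]
    exact Or.inr TM2.stmts₁_self

/-- The number which represents the stack with content `[n]`. -/
def inputNum (n : ℕ) : ℕ := stackNum (trList [n])

theorem inputNum_zero : inputNum 0 = 2 := by
  simp [inputNum, stackNum, digit]

theorem inputNum_pos {n : ℕ} (hn : n ≠ 0) : inputNum n = 3 + n % 2 + 5 * inputNum (n / 2) := by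
  have key : ∀ p : Num, inputNum (p : ℕ) = stackNum (trNum p ++ [Γ'.cons]) := by
    intro p
    simp [inputNum, trNat]
  have hp : ∀ p : PosNum, inputNum (p : ℕ) = stackNum (trPosNum p ++ [Γ'.cons]) := fun p =>
    key (.pos p)
  obtain ⟨p, rfl⟩ : ∃ p : PosNum, (p : ℕ) = n := by
    rcases h : (n : Num) with _ | p
    · have := congrArg (fun x : Num => (x : ℕ)) h
      simp only [Num.to_of_nat] at this
      exact absurd this hn
    · exact ⟨p, by rw [← Num.to_of_nat n, h]; rfl⟩
  cases p with
  | one =>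
    rw [hp]
    change _ = 3 + 1 % 2 + 5 * inputNum (1 / 2)
    rw [show 1 / 2 = 0 from rfl, inputNum_zero]
    rfl
  | bit0 p =>
    have h1 : ((PosNum.bit0 p : PosNum) : ℕ) % 2 = 0 := by rw [PosNum.cast_bit0]; omega
    have h2 : ((PosNum.bit0 p : PosNum) : ℕ) / 2 = p := by rw [PosNum.cast_bit0]; omega
    rw [h1, h2, hp, hp]
    rfl
  | bit1 p =>
    have h1 : ((PosNum.bit1 p : PosNum) : ℕ) % 2 = 1 := by rw [PosNum.cast_bit1]; omega
    have h2 : ((PosNum.bit1 p : PosNum) : ℕ) / 2 = p := by rw [PosNum.cast_bit1]; omega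
    rw [h1, h2, hp, hp]
    rfl

theorem primrec_inputNum : Primrec inputNum := by
  have hl : Primrec fun n : ℕ => if n = 0 then ([] : List ℕ) else [n / 2] :=
    Primrec.ite (Primrec.eq.comp Primrec.id (Primrec.const 0)) (Primrec.const [])
      (Primrec.list_cons.comp (Primrec.nat_div.comp Primrec.id (Primrec.const 2))
        (Primrec.const []))
  have hg : Primrec₂ fun (n : ℕ) (L : List ℕ) =>
      if n = 0 then some 2 else L.head?.map fun x => 3 + n % 2 + 5 * x := by
    refine Primrec.ite (Primrec.eq.comp Primrec.fst (Primrec.const 0)) (Primrec.const (some 2)) ?_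
    refine Primrec.option_map (Primrec.list_head?.comp Primrec.snd) ?_
    exact (Primrec.nat_add.comp (Primrec.nat_add.comp (Primrec.const 3)
      (Primrec.nat_mod.comp (Primrec.fst.comp Primrec.fst) (Primrec.const 2)))
      (Primrec.nat_mul.comp (Primrec.const 5) Primrec.snd)).to₂
  refine Primrec.nat_omega_rec' inputNum (m := id) Primrec.id hl hg ?_ ?_
  · intro n n' h
    split_ifs at h with h0
    · simp at h
    · obtain rfl : n' = n / 2 := by simpa using h
      simp only [id]
      omega
  · intro n
    by_cases h : n = 0
    · simp [h, inputNum_zero]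
    · simp [h, inputNum_pos h]

/-- The halting problem, for codes of partial recursive functions run on the input `0`. -/
theorem exists_undecidable_partrec : ∃ f : ℕ →. ℕ, Partrec f ∧
    ¬ ∃ h : ℕ → Bool, Computable h ∧ ∀ n, h n = true ↔ (f n).Dom := by
  refine ⟨fun n => (Denumerable.ofNat Nat.Partrec.Code n).eval 0, ?_, ?_⟩
  · exact Nat.Partrec.Code.eval_part.comp (Computable.ofNat _) (Computable.const 0)
  · rintro ⟨h, hc, hh⟩
    refine ComputablePred.halting_problem 0 (ComputablePred.computable_iff.2
      ⟨fun c => h (Encodable.encode c), hc.comp Computable.encode, ?_⟩)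
    funext c
    simp [hh]

/-- The program which evaluates partial recursive functions. -/
def evalProg : Λ' → TStmt := tr

/-- A finite affine system for which it is undecidable whether the configurations in a computable
sequence are connected to a fixed configuration. -/
theorem exists_undecidable_system : ∃ (Q : Type) (_ : Finite Q) (M : AffSys Q K' (Q × (K' → Fin 5)))
    (c₀ : Q × (K' → ℤ)) (q : Q), ¬ ∃ h : ℕ → Bool, Computable h ∧ ∀ n, h n = true ↔
      Relation.EqvGen M.Step c₀ (q, Pi.single K'.main (inputNum n : ℤ)) := by
  obtain ⟨f, hf, hund⟩ := exists_undecidable_partrec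
  obtain ⟨c, hc⟩ := Turing.ToPartrec.Code.exists_code (Nat.Partrec'.part_iff₁.2 hf)
  have hdom : ∀ n, (f n).Dom ↔ (StateTransition.eval (TM2.step evalProg) (init c [n])).Dom := by
    intro n
    have h1 := tr_eval c [n]
    rw [hc ⟨[n], rfl⟩] at h1
    change _ ↔ (StateTransition.eval (TM2.step tr) (init c [n])).Dom
    rw [h1]
    simp
    rfl
  obtain ⟨S, hstart, hS⟩ : ∃ S : Finset Λ', trNormal c Cont'.halt ∈ S ∧
      ∀ l ∈ S, TM2.SupportsStmt S (evalProg l) := ⟨codeSupp c Cont'.halt, tr_supports c Cont'.halt⟩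
  let s : Set TState := tStates evalProg S
  have hs := tNext_mem evalProg S hS
  have := (finite_tStates evalProg S).to_subtype
  have hq : some (evalProg (trNormal c Cont'.halt), none) ∈ s := some_mem_tStates _ hstart _
  have hn : (none : TState) ∈ s := by rintro y ⟨⟩
  refine ⟨s, this, ((tSys evalProg).restrict s hs).toAff, (⟨none, hn⟩, 0), ⟨_, hq⟩, ?_⟩
  have hinj : Injective (Prod.map Subtype.val id : s × (K' → ℤ) → TState × (K' → ℤ)) :=
    Subtype.val_injective.prodMap injective_id
  have hfix : ((tSys evalProg).restrict s hs).run (⟨none, hn⟩, 0) = (⟨none, hn⟩, 0) := by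
    refine hinj (((tSys evalProg).restrict_run s hs 1 _).trans ?_)
    exact (tSys_run_none evalProg 0).trans (by simp; rfl)
  rintro ⟨h, hcomp, hh⟩
  refine hund ⟨h, hcomp, fun n => ?_⟩
  rw [hh, StackSys.eqvGen_iff _ hfix, hdom]
  refine Iff.trans ?_ (tSys_halts evalProg (init c [n])).symm
  refine exists_congr fun m => ?_
  rw [← hinj.eq_iff]
  have h0 : Prod.map Subtype.val id ((⟨_, hq⟩, Pi.single K'.main (inputNum n : ℤ)) : s × (K' → ℤ)) =
      tCfg evalProg (init c [n]) := by
    refine Prod.ext rfl (funext fun k => ?_)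
    cases k <;> rfl
  have h1 := (tSys evalProg).restrict_run s hs m (⟨_, hq⟩, Pi.single K'.main (inputNum n : ℤ))
  rw [h0] at h1
  exact iff_of_eq (congrArg (· = ((none, 0) : TState × (K' → ℤ))) h1)

end IsoClass

/-! ### The von Neumann trace -/

namespace IsoClass
open Function

section Ltwo
open scoped Classical InnerProductSpace ENNReal

/-- Real square-summable functions on `X`. -/
abbrev Ltwo (X : Type) : Type := lp (fun _ : X => ℝ) 2

/-- Composition with an injective map, as an operator between spaces of square-summable
functions. -/
noncomputable def pull {X X' : Type} (φ : X' → X) (hφ : Injective φ) : Ltwo X →L[ℝ] Ltwo X' :=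
  LinearMap.mkContinuous
    { toFun := fun f => ⟨fun x => f (φ x), memℓp_gen
        (((memℓp_gen_iff (by norm_num)).1 (lp.memℓp f)).comp_injective hφ)⟩
      map_add' := fun f g => rfl
      map_smul' := fun c f => rfl } 1 (by
      intro f
      rw [one_mul]
      refine lp.norm_le_of_forall_sum_le (by norm_num) (norm_nonneg _) fun s => ?_
      have := lp.sum_rpow_le_norm_rpow (p := 2) (by norm_num) f (s.map ⟨φ, hφ⟩)
      rw [Finset.sum_map] at this
      exact this)

@[simp] theorem pull_apply {X X' : Type} (φ : X' → X) (hφ : Injective φ) (f : Ltwo X) (x : X') :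
    pull φ hφ f x = f (φ x) := rfl

/-- The indicator function of a point. -/
noncomputable def delta {X : Type} (x : X) : Ltwo X := lp.single 2 x (1 : ℝ)

theorem delta_apply {X : Type} (x y : X) : delta x y = if y = x then 1 else 0 := by
  rw [delta, lp.single_apply, Pi.single_apply]

theorem pull_delta {X X' : Type} (φ : X' → X) (hφ : Injective φ) (x : X') :
    pull φ hφ (delta (φ x)) = delta x := by
  ext y
  simp [delta_apply, hφ.eq_iff]

theorem inner_delta {X : Type} (f : Ltwo X) (x : X) : ⟪f, delta x⟫_ℝ = f x := by
  rw [delta, lp.inner_single_right]; simp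

/-- The matrix entries of a composition of operators are given by matrix multiplication. -/
theorem hasSum_entry {X X' : Type} (S : Ltwo X →L[ℝ] Ltwo X') (R : Ltwo X' →L[ℝ] Ltwo X) (p q : X) :
    HasSum (fun x => S (delta p) x * R (delta x) q) (R (S (delta p)) q) := by
  have h := lp.hasSum_inner (𝕜 := ℝ) (S (delta p)) (ContinuousLinearMap.adjoint R (delta q))
  rw [ContinuousLinearMap.adjoint_inner_right, inner_delta] at h
  refine h.congr_fun ?_
  intro x
  have : ContinuousLinearMap.adjoint R (delta q) x = R (delta x) q := by
    rw [← inner_delta, ContinuousLinearMap.adjoint_inner_left, real_inner_comm, inner_delta]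
  rw [this]
  simp [mul_comm]

variable {Γ : Type} [Group Γ]

/-- The right translation by `h` on `Γ × M`. -/
noncomputable def shift (M : Type) (h : Γ) : Ltwo (Γ × M) →L[ℝ] Ltwo (Γ × M) :=
  pull (fun p => (p.1 * h, p.2)) fun p q hpq => by
    simpa [Prod.ext_iff] using hpq

/-- Operators commuting with all right translations. -/
def Equivariant {M N : Type} (S : Ltwo (Γ × M) →L[ℝ] Ltwo (Γ × N)) : Prop :=
  ∀ h f, S (shift M h f) = shift N h (S f)

/-- The matrix entries of an equivariant operator are invariant under right translation. -/
theorem Equivariant.entry {M N : Type} {S : Ltwo (Γ × M) →L[ℝ] Ltwo (Γ × N)} (hS : Equivariant S)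
    (a b c : Γ) (i : M) (j : N) : S (delta (a * c, i)) (b * c, j) = S (delta (a, i)) (b, j) := by
  have h1 : shift M c (delta (a * c, i)) = delta (a, i) := pull_delta _ _ (a, i)
  rw [← h1, hS]
  rfl

theorem Equivariant.comp {M N L : Type} {S : Ltwo (Γ × M) →L[ℝ] Ltwo (Γ × N)}
    {R : Ltwo (Γ × L) →L[ℝ] Ltwo (Γ × M)} (hS : Equivariant S) (hR : Equivariant R) :
    Equivariant (S.comp R) := fun h f => by
  simp [hR h f, hS h (R f)]

theorem Equivariant.adjoint {M N : Type} {S : Ltwo (Γ × M) →L[ℝ] Ltwo (Γ × N)}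
    (hS : Equivariant S) : Equivariant (ContinuousLinearMap.adjoint S) := by
  intro h f
  ext ⟨g, i⟩
  change _ = ContinuousLinearMap.adjoint S f (g * h, i)
  rw [← inner_delta, ← inner_delta, ContinuousLinearMap.adjoint_inner_left,
    ContinuousLinearMap.adjoint_inner_left]
  have h1 : delta (g, i) = shift M h (delta (g * h, i)) := (pull_delta _ _ (g, i)).symm
  rw [h1, hS]
  exact (Equiv.prodCongr (Equiv.mulRight h) (Equiv.refl N)).tsum_eq
    (fun p => ⟪f p, S (delta (g * h, i)) p⟫_ℝ)

/-- The von Neumann trace of an operator: the sum of its diagonal entries at the identity of `Γ`. -/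
noncomputable def vtrace {M : Type} [Fintype M] (S : Ltwo (Γ × M) →L[ℝ] Ltwo (Γ × M)) : ℝ :=
  ∑ i, S (delta (1, i)) (1, i)

theorem tsum_prod_fintype {X M : Type} [Fintype M] {F : X × M → ℝ} {a : ℝ} (h : HasSum F a) :
    a = ∑ j, ∑' x, F (x, j) := by
  rw [← h.tsum_eq, h.summable.tsum_prod]
  simp only [tsum_fintype]
  refine Summable.tsum_finsetSum fun j _ => ?_
  exact h.summable.comp_injective (i := fun x => (x, j)) fun a b h => by simpa using h

/-- The trace property. -/
theorem vtrace_comm {M N : Type} [Fintype M] [Fintype N] {S : Ltwo (Γ × M) →L[ℝ] Ltwo (Γ × N)}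
    {R : Ltwo (Γ × N) →L[ℝ] Ltwo (Γ × M)} (hS : Equivariant S) (hR : Equivariant R) :
    vtrace (R.comp S) = vtrace (S.comp R) := by
  have h1 : ∀ i, (R.comp S) (delta (1, i)) (1, i) = ∑ j, ∑' g : Γ,
      S (delta (g, i)) (1, j) * R (delta (1, j)) (g, i) := by
    intro i
    refine (tsum_prod_fintype (hasSum_entry S R (1, i) (1, i))).trans
      (Finset.sum_congr rfl fun j _ => ?_)
    rw [← (Equiv.inv Γ).tsum_eq]
    refine tsum_congr fun g => ?_
    have e1 := hS.entry 1 g⁻¹ g i j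
    have e2 := hR.entry g⁻¹ 1 g j i
    simp only [one_mul, inv_mul_cancel] at e1 e2
    simp [← e1, ← e2]
  have h2 : ∀ j, (S.comp R) (delta (1, j)) (1, j) = ∑ i, ∑' g : Γ,
      S (delta (g, i)) (1, j) * R (delta (1, j)) (g, i) := by
    intro j
    refine (tsum_prod_fintype (hasSum_entry R S (1, j) (1, j))).trans
      (Finset.sum_congr rfl fun i _ => tsum_congr fun g => mul_comm _ _)
  simp only [vtrace, h1, h2]
  exact Finset.sum_comm

end Ltwo
end IsoClass

/-! ### Monotonicity of the von Neumann dimension -/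

namespace IsoClass
open Function

section Ltwo
open scoped Classical InnerProductSpace ENNReal
open Filter Topology ContinuousLinearMap

theorem norm_one_sub_adjoint_comp {X X' : Type} {T : Ltwo X →L[ℝ] Ltwo X'} (hT : ‖T‖ ≤ 1) :
    ‖1 - (adjoint T).comp T‖ ≤ 1 := by
  refine opNorm_le_bound _ zero_le_one fun f => ?_
  rw [one_mul]
  have h1 : ⟪f, adjoint T (T f)⟫_ℝ = ‖T f‖ ^ 2 := by
    rw [adjoint_inner_right, real_inner_self_eq_norm_sq]
  have h2 : ‖adjoint T (T f)‖ ≤ ‖T f‖ := by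
    refine ((adjoint T).le_of_opNorm_le ?_ _).trans (one_mul _).le
    rwa [LinearIsometryEquiv.norm_map]
  have h3 := norm_sub_sq_real f (adjoint T (T f))
  rw [h1] at h3
  have h4 : ‖adjoint T (T f)‖ ^ 2 ≤ ‖T f‖ ^ 2 := by gcongr
  refine le_of_sq_le_sq ?_ (norm_nonneg _)
  change ‖f - adjoint T (T f)‖ ^ 2 ≤ _
  nlinarith [sq_nonneg ‖T f‖]

variable {Γ : Type} [Group Γ] {M N : Type}

theorem Equivariant.pow {S : Ltwo (Γ × M) →L[ℝ] Ltwo (Γ × M)} (hS : Equivariant S) (n : ℕ) :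
    Equivariant (S ^ n) := by
  induction n with
  | zero => intro h f; rfl
  | succ n ih => rw [pow_succ]; exact ih.comp hS

variable [Fintype M] [Fintype N]

theorem vtrace_sub (S R : Ltwo (Γ × M) →L[ℝ] Ltwo (Γ × M)) :
    vtrace (S - R) = vtrace S - vtrace R := by
  simp [vtrace, Finset.sum_sub_distrib]

theorem vtrace_one : vtrace (1 : Ltwo (Γ × M) →L[ℝ] Ltwo (Γ × M)) = Fintype.card M := by
  simp [vtrace, delta_apply]

/-- The averaged traces of the powers of a contraction converge to the trace of the projection onto
its fixed vectors, which is nonnegative, and is zero if there are no nonzero fixed vectors. -/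
theorem exists_tendsto_vtrace (S : Ltwo (Γ × M) →L[ℝ] Ltwo (Γ × M)) (hS : ‖S‖ ≤ 1) :
    ∃ d : ℝ, 0 ≤ d ∧ ((∀ f, S f = f → f = 0) → d = 0) ∧
      Tendsto (fun n : ℕ => (n : ℝ)⁻¹ * ∑ k ∈ Finset.range n, vtrace (S ^ k)) atTop (𝓝 d) := by
  set K := S.eqLocus (1 : Ltwo (Γ × M) →L[ℝ] Ltwo (Γ × M)) with hK
  refine ⟨∑ i, (K.orthogonalProjectionOnto (delta (1, i)) : Ltwo (Γ × M)) (1, i),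
    Finset.sum_nonneg fun i _ => ?_, fun h => Finset.sum_eq_zero fun i _ => ?_, ?_⟩
  · rw [← inner_delta]
    have := K.inner_orthogonalProjectionOnto_eq_of_mem_left
      (K.orthogonalProjectionOnto (delta (1, i))) (delta (1, i))
    rw [← this]
    exact real_inner_self_nonneg
  · have : (K.orthogonalProjectionOnto (delta (1, i)) : Ltwo (Γ × M)) = 0 := h _
      (K.orthogonalProjectionOnto (delta (1, i))).2
    rw [this]; rfl
  · have : (fun n : ℕ => (n : ℝ)⁻¹ * ∑ k ∈ Finset.range n, vtrace (S ^ k)) = fun n : ℕ =>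
        ∑ i, birkhoffAverage ℝ S _root_.id n (delta (1, i)) (1, i) := by
      ext n
      simp only [vtrace, birkhoffAverage, birkhoffSum]
      rw [Finset.sum_comm, Finset.mul_sum]
      refine Finset.sum_congr rfl fun i _ => ?_
      rw [lp.coeFn_smul, Pi.smul_apply, lp.coeFn_sum, Finset.sum_apply, smul_eq_mul]
      simp
    rw [this]
    refine tendsto_finsetSum _ fun i _ => ?_
    have h := S.tendsto_birkhoffAverage_orthogonalProjection (𝕜 := ℝ) hS (delta (1, i))
    exact ((lp.evalCLM ℝ (fun _ : Γ × M => ℝ) 2 (1, i)).continuous.tendsto _).comp h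

/-- The operators `1 - T* T` and `1 - T T*` have powers whose traces differ by the constant
`card M - card N`, by the trace property and since `T*` intertwines them. The averages of these
traces converge to `0` for the first operator, which has no fixed vectors when `T` is injective, and
to a nonnegative number for the second. -/
theorem card_le_of_contraction {T : Ltwo (Γ × M) →L[ℝ] Ltwo (Γ × N)} (hT : Equivariant T)
    (hinj : Injective T) (hn : ‖T‖ ≤ 1) : Fintype.card M ≤ Fintype.card N := by
  set P : Ltwo (Γ × M) →L[ℝ] Ltwo (Γ × M) := 1 - (adjoint T).comp T with hP
  set Q : Ltwo (Γ × N) →L[ℝ] Ltwo (Γ × N) := 1 - T.comp (adjoint T) with hQ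
  have hPQ : ∀ n f, (P ^ n) (adjoint T f) = adjoint T ((Q ^ n) f) := by
    intro n
    induction n with
    | zero => intro f; rfl
    | succ n ih =>
      intro f
      have h1 : P (adjoint T f) = adjoint T (Q f) := by simp [hP, hQ]
      rw [pow_succ, pow_succ, mul_apply_eq_comp, mul_apply_eq_comp, h1, ih]
  have key : ∀ n, vtrace (P ^ n) - Fintype.card M = vtrace (Q ^ n) - Fintype.card N := by
    intro n
    induction n with
    | zero => simp [vtrace_one]
    | succ n ih =>
      have hQe : Equivariant Q := by
        intro h f
        simp [hQ, (hT.comp hT.adjoint) h f]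
      have h1 : P ^ (n + 1) = P ^ n - (adjoint T).comp ((Q ^ n).comp T) := by
        ext1 f
        rw [pow_succ, mul_apply_eq_comp]
        change (P ^ n) (f - adjoint T (T f)) = (P ^ n) f - adjoint T ((Q ^ n) (T f))
        rw [map_sub, hPQ]
      have h2 : Q ^ (n + 1) = Q ^ n - ((Q ^ n).comp T).comp (adjoint T) := by
        ext1 f
        rw [pow_succ, mul_apply_eq_comp]
        exact map_sub (Q ^ n) f (T (adjoint T f))
      rw [h1, h2, vtrace_sub, vtrace_sub, vtrace_comm ((hQe.pow n).comp hT) hT.adjoint]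
      linarith
  obtain ⟨d, -, hd, hdt⟩ := exists_tendsto_vtrace P (norm_one_sub_adjoint_comp hn)
  obtain ⟨e, he, -, het⟩ := exists_tendsto_vtrace Q (by
    have := norm_one_sub_adjoint_comp (T := adjoint T) (by rwa [LinearIsometryEquiv.norm_map])
    rwa [adjoint_adjoint] at this)
  have hd0 : d = 0 := hd fun f hf => by
    have h1 : adjoint T (T f) = 0 := by simpa [hP] using hf
    have h2 : ⟪f, adjoint T (T f)⟫_ℝ = ‖T f‖ ^ 2 := by
      rw [adjoint_inner_right, real_inner_self_eq_norm_sq]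
    rw [h1, inner_zero_right] at h2
    refine hinj ?_
    rw [map_zero]
    simpa using h2.symm
  have hlim := hdt.sub het
  have hconst : Tendsto (fun _ : ℕ => (Fintype.card M - Fintype.card N : ℝ)) atTop (𝓝 (d - e)) := by
    refine hlim.congr' ?_
    filter_upwards [eventually_gt_atTop 0] with n hn0
    rw [← mul_sub, ← Finset.sum_sub_distrib]
    rw [Finset.sum_congr rfl (g := fun _ => (Fintype.card M - Fintype.card N : ℝ)) fun k _ => by
      linarith [key k]]
    have : (n : ℝ) ≠ 0 := by positivity
    simp; field_simp
  have := tendsto_nhds_unique hconst tendsto_const_nhds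
  have : (Fintype.card M : ℝ) ≤ Fintype.card N := by linarith
  exact_mod_cast this

/-- Monotonicity of the von Neumann dimension for free Hilbert modules. -/
theorem card_le_of_equivariant {T : Ltwo (Γ × M) →L[ℝ] Ltwo (Γ × N)} (hT : Equivariant T)
    (hinj : Injective T) : Fintype.card M ≤ Fintype.card N := by
  have hc : (‖T‖ + 1)⁻¹ ≠ 0 := by positivity
  refine card_le_of_contraction (T := (‖T‖ + 1)⁻¹ • T) (fun h f => ?_) (fun f g hfg => ?_) ?_
  · simp [hT h f]
  · exact hinj (smul_right_injective _ hc hfg)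
  · rw [norm_smul, norm_inv, Real.norm_of_nonneg (by positivity), inv_mul_le_iff₀ (by positivity)]
    linarith

end Ltwo
end IsoClass

/-! ### Free products with an infinite group -/

namespace IsoClass
open Function

section Ltwo
open scoped Classical InnerProductSpace ENNReal
open ContinuousLinearMap

section Cocycle
variable {Γ : Type} [Group Γ]

/-- The left translation by `g`. -/
noncomputable def leftShift (g : Γ) : Ltwo (Γ × Unit) →L[ℝ] Ltwo (Γ × Unit) :=
  pull (fun p => (g⁻¹ * p.1, p.2)) fun p q hpq => by simpa [Prod.ext_iff] using hpq

theorem leftShift_mul (g h : Γ) : leftShift (g * h) = (leftShift g).comp (leftShift h) := by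
  ext f p
  change f ((g * h)⁻¹ * p.1, p.2) = f (h⁻¹ * (g⁻¹ * p.1), p.2)
  rw [mul_inv_rev, mul_assoc]

theorem leftShift_one : leftShift (1 : Γ) = ContinuousLinearMap.id ℝ _ := by
  ext f p
  change f (1⁻¹ * p.1, p.2) = f p
  simp

theorem leftShift_equivariant (g : Γ) : Equivariant (leftShift g) := by
  intro h f
  ext p
  change f (g⁻¹ * p.1 * h, p.2) = f (g⁻¹ * (p.1 * h), p.2)
  rw [mul_assoc]

/-- The projection of square-summable functions on `Γ × M` to a component. -/
noncomputable def component {M : Type} (i : M) : Ltwo (Γ × M) →L[ℝ] Ltwo (Γ × Unit) :=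
  pull (fun p => (p.1, i)) fun p q hpq => by simpa [Prod.ext_iff] using hpq

theorem component_equivariant {M : Type} (i : M) : Equivariant (component (Γ := Γ) i) :=
  fun _ _ => rfl

theorem component_adjoint_apply {X M : Type} (i k : M) (f : Ltwo (X × Unit)) (x : X) :
    adjoint (component i) f (x, k) = if i = k then f (x, ()) else 0 := by
  rw [← inner_delta, adjoint_inner_left]
  split_ifs with h
  · subst h
    have : component i (delta (x, i)) = delta (x, ()) := pull_delta _ _ (x, ())
    rw [this, inner_delta]
  · have : component i (delta (x, k)) = 0 := by
      ext p
      change delta (x, k) (p.1, i) = 0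
      simp [delta_apply, h]
    rw [this, inner_zero_right]

end Cocycle

variable {A : Type} [Group A] {M : Type}

/-- The free product of copies of `A` indexed by `M`. -/
abbrev FreePow (A : Type) [Group A] (M : Type) : Type := Monoid.CoprodI (fun _ : M => A)

/-- The inclusion of a factor. -/
abbrev FreePow.of (i : M) : A →* FreePow A M := Monoid.CoprodI.of (M := fun _ : M => A) (i := i)

/-- The affine action of the free product for which the `i`-th factor fixes minus the `i`-th
component map. -/
noncomputable def affineAction : FreePow A M →*
    Function.End (Ltwo (FreePow A M × M) →L[ℝ] Ltwo (FreePow A M × Unit)) :=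
  Monoid.CoprodI.lift fun i =>
    { toFun := fun a X => (leftShift (FreePow.of i a)).comp (X + component i) - component i
      map_one' := by
        funext X
        rw [map_one, leftShift_one, ContinuousLinearMap.id_comp, add_sub_cancel_right]; rfl
      map_mul' := fun a b => by
        funext X
        rw [map_mul, leftShift_mul]
        change _ = (leftShift _).comp ((leftShift _).comp (X + component i) - component i +
          component i) - component i
        rw [sub_add_cancel, ContinuousLinearMap.comp_assoc] }

/-- The cocycle of `affineAction`. -/
noncomputable def cocycle (g : FreePow A M) :
    Ltwo (FreePow A M × M) →L[ℝ] Ltwo (FreePow A M × Unit) :=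
  affineAction g 0

theorem cocycle_of (i : M) (a : A) : cocycle (FreePow.of i a) =
    (leftShift (FreePow.of i a)).comp (component i) - component i := by
  rw [cocycle, affineAction, FreePow.of, Monoid.CoprodI.lift_of]
  change (leftShift _).comp (0 + component i) - component i = _
  rw [zero_add]

theorem affineAction_apply (g : FreePow A M) : ∀ X,
    affineAction g X = (leftShift g).comp X + cocycle g := by
  induction g using Monoid.CoprodI.induction_on with
  | one =>
    intro X
    have h1 : ∀ X, affineAction (1 : FreePow A M) X = X := fun X => by rw [map_one]; rfl
    rw [cocycle, h1, h1, leftShift_one, ContinuousLinearMap.id_comp, add_zero]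
  | of i a =>
    intro X
    rw [show Monoid.CoprodI.of a = FreePow.of i a from rfl, cocycle_of, affineAction, FreePow.of,
      Monoid.CoprodI.lift_of]
    change (leftShift _).comp (X + component i) - component i = _
    rw [ContinuousLinearMap.comp_add, add_sub_assoc]
  | mul g h hg hh =>
    intro X
    have h1 : ∀ X, affineAction (g * h) X = affineAction g (affineAction h X) := fun X => by
      rw [map_mul]; rfl
    rw [cocycle, h1, h1, hh X, hg, hg (affineAction h 0), leftShift_mul,
      ContinuousLinearMap.comp_add, ContinuousLinearMap.comp_assoc, ← cocycle, add_assoc]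

theorem cocycle_mul (g h : FreePow A M) :
    cocycle (g * h) = (leftShift g).comp (cocycle h) + cocycle g := by
  rw [← affineAction_apply, cocycle, map_mul]; rfl

theorem cocycle_one : cocycle (1 : FreePow A M) = 0 := by
  rw [cocycle, map_one]; rfl

theorem cocycle_equivariant (g : FreePow A M) : Equivariant (cocycle g) := by
  induction g using Monoid.CoprodI.induction_on with
  | one => intro h f; simp [cocycle_one]
  | of i a =>
    rw [show Monoid.CoprodI.of a = FreePow.of i a from rfl, cocycle_of]
    intro h f
    simp [component_equivariant i h f, leftShift_equivariant _ h (component i f)]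
  | mul g h hg hh =>
    rw [cocycle_mul]
    intro k f
    simp [hg k f, hh k f, leftShift_equivariant _ k (cocycle h f)]

/-- A vector killed by the whole cocycle is invariant under the left translations by the infinite
factors, hence zero by square-summability. -/
theorem eq_zero_of_cocycle [Infinite A] (f : Ltwo (FreePow A M × M))
    (h : ∀ g, cocycle g f = 0) : f = 0 := by
  ext ⟨x, i⟩
  have h1 : ∀ a : A, f (FreePow.of i a * x, i) = f (x, i) := by
    intro a
    have h2 := h (FreePow.of i a⁻¹)
    rw [cocycle_of, sub_apply, sub_eq_zero] at h2
    have h3 := congrArg (fun F : Ltwo (FreePow A M × Unit) => F (x, ())) h2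
    change f ((FreePow.of i a⁻¹)⁻¹ * x, i) = f (x, i) at h3
    rwa [map_inv, inv_inv] at h3
  have h2 : Summable fun a : A => ‖f (FreePow.of i a * x, i)‖ ^ (2 : ℝ≥0∞).toReal :=
    ((memℓp_gen_iff (by norm_num)).1 (lp.memℓp f)).comp_injective
      (i := fun a => (FreePow.of i a * x, i)) fun a b hab =>
        Monoid.CoprodI.of_injective i (by simpa using hab)
  simp only [h1] at h2
  have h3 := summable_const_iff _ |>.1 h2
  simpa using h3

/-- A free product of `M` copies of an infinite group needs at least as many generators as `M` has
elements: the values of the cocycle on the generators are the components of an injective equivariant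
operator. -/
theorem card_le_of_generates [Infinite A] [Fintype M] {r : ℕ} (g : Fin r → FreePow A M)
    (hg : Subgroup.closure (Set.range g) = ⊤) : Fintype.card M ≤ r := by
  have := card_le_of_equivariant
    (T := ∑ j, (adjoint (component (Γ := FreePow A M) j)).comp (cocycle (g j))) ?_ ?_
  · simpa using this
  · intro h f
    simp only [sum_apply, map_sum]
    exact Finset.sum_congr rfl fun j _ =>
      ((component_equivariant j).adjoint.comp (cocycle_equivariant (g j))) h f
  · rw [injective_iff_map_eq_zero]
    intro f hf
    have h1 : ∀ k, cocycle (g k) f = 0 := by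
      intro k
      ext ⟨x, u⟩
      have h2 := congrArg (fun F : Ltwo (FreePow A M × Fin r) => F (x, k)) hf
      simp only [sum_apply, lp.coeFn_sum, Finset.sum_apply, ContinuousLinearMap.comp_apply,
        component_adjoint_apply] at h2
      simpa using h2
    refine eq_zero_of_cocycle f fun x => ?_
    have hx : x ∈ Subgroup.closure (Set.range g) := hg ▸ Subgroup.mem_top x
    induction hx using Subgroup.closure_induction with
    | mem x hx => obtain ⟨k, rfl⟩ := hx; exact h1 k
    | one => rw [cocycle_one]; rfl
    | mul x y _ _ hx hy => rw [cocycle_mul]; simp [hx, hy]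
    | inv x _ hx =>
      have h2 := cocycle_mul x⁻¹ x
      rw [inv_mul_cancel, cocycle_one] at h2
      have h3 := congrArg (fun F => F f) h2
      simpa [hx] using h3.symm

end Ltwo

/-- A finitely generated group does not map onto its free product with an infinite group, because
otherwise it would map onto free products of arbitrarily many copies of the latter. -/
theorem not_surjective_coprod {G A : Type} [Group G] [Group A] [Infinite A] {r : ℕ}
    (g : Fin r → G) (hg : Subgroup.closure (Set.range g) = ⊤) (π : G →* Monoid.Coprod G A) :
    ¬ Surjective π := by
  intro hπ
  have key : ∀ N : ℕ, ∃ ρ : G →* FreePow A (Fin N), Surjective ρ := by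
    intro N
    induction N with
    | zero =>
      refine ⟨1, fun x => ⟨1, ?_⟩⟩
      induction x using Monoid.CoprodI.induction_on with
      | one => rfl
      | of i => exact i.elim0
      | mul x y hx hy => rw [← hx, ← hy]; simp
    | succ N ih =>
      obtain ⟨ρ, hρ⟩ := ih
      let σ : Monoid.Coprod G A →* FreePow A (Fin (N + 1)) := Monoid.Coprod.lift
        ((Monoid.CoprodI.lift fun i => FreePow.of i.castSucc).comp ρ) (FreePow.of (Fin.last N))
      refine ⟨σ.comp π, ?_⟩
      rw [MonoidHom.coe_comp]
      refine Surjective.comp (fun x => ?_) hπ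
      induction x using Monoid.CoprodI.induction_on with
      | one => exact ⟨1, map_one _⟩
      | of i a =>
        induction i using Fin.lastCases with
        | last => exact ⟨Monoid.Coprod.inr a, by simp [σ]⟩
        | cast i =>
          obtain ⟨y, hy⟩ := hρ (FreePow.of i a)
          exact ⟨Monoid.Coprod.inl y, by simp [σ, hy]⟩
      | mul x y hx hy =>
        obtain ⟨x', rfl⟩ := hx
        obtain ⟨y', rfl⟩ := hy
        exact ⟨x' * y', map_mul _ _ _⟩
  obtain ⟨ρ, hρ⟩ := key (r + 1)
  have := card_le_of_generates (fun j => ρ (g j)) (by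
    have h1 : Set.range (fun j => ρ (g j)) = ρ '' Set.range g := Set.range_comp ρ g
    rw [h1, ← MonoidHom.map_closure, hg, ← MonoidHom.range_eq_map,
      MonoidHom.range_eq_top.2 hρ])
  simp at this

end IsoClass

/-! ### Presentations and their codes -/

namespace IsoClass
open Function
open scoped commutatorElement

/-- The codes of finite presentations. -/
abbrev PresCode : Type := ℕ × List (List (ℕ × Bool))

theorem wordToFree_append (n : ℕ) (w w' : List (ℕ × Bool)) :
    wordToFree n (w ++ w') = wordToFree n w * wordToFree n w' := by
  simp [wordToFree]

theorem wordToFree_surjective {n : ℕ} (hn : 0 < n) : Surjective (wordToFree n) := by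
  intro g
  induction g using FreeGroup.induction_on with
  | C1 => exact ⟨[], rfl⟩
  | of x => exact ⟨[(x, true)], by simp [wordToFree, hn, Nat.mod_eq_of_lt x.2]⟩
  | inv_of x _ => exact ⟨[(x, false)], by simp [wordToFree, hn, Nat.mod_eq_of_lt x.2]⟩
  | mul x y hx hy =>
    obtain ⟨a, rfl⟩ := hx
    obtain ⟨b, rfl⟩ := hy
    exact ⟨a ++ b, wordToFree_append n a b⟩

/-- The word `u ^ n`. -/
def powWord (u : List (ℕ × Bool)) (n : ℕ) : List (ℕ × Bool) :=
  Nat.rec [] (fun _ w => u ++ w) n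

theorem wordToFree_powWord (N : ℕ) (u : List (ℕ × Bool)) (n : ℕ) :
    wordToFree N (powWord u n) = wordToFree N u ^ n := by
  induction n with
  | zero => rfl
  | succ n ih => rw [pow_succ', ← ih, ← wordToFree_append]; rfl

theorem computable_powWord (u : List (ℕ × Bool)) : Computable (powWord u) :=
  Computable.nat_rec (f := fun n : ℕ => n) (g := fun _ => ([] : List (ℕ × Bool)))
    (h := fun _ p => u ++ p.2) Computable.id (Computable.const _)
    (Computable.list_append.comp (Computable.const u) (Computable.snd.comp Computable.snd)).to₂

/-- The relator `lastRel` can be written down computably. -/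
theorem exists_lastRel_word {N : ℕ} (hN : 0 < N) (k t ξ w : FreeGroup (Fin N)) :
    ∃ f : ℕ → List (ℕ × Bool), Computable f ∧ ∀ n, wordToFree N (f n) = lastRel k t ξ w n := by
  choose W hW using wordToFree_surjective hN
  refine ⟨fun n => W k ++ (powWord (W ξ) n ++ (W t ++ (powWord (W ξ⁻¹) n ++ (W k⁻¹ ++
    (powWord (W ξ) n ++ (W t⁻¹ ++ (powWord (W ξ⁻¹) n ++ W w⁻¹))))))), ?_, fun n => ?_⟩
  · have c := fun g => Computable.const (α := ℕ) (W g)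
    have p := fun g => computable_powWord (W g)
    have a : ∀ {f g : ℕ → List (ℕ × Bool)}, Computable f → Computable g →
        Computable fun n => f n ++ g n := fun hf hg => Computable.list_append.comp hf hg
    exact a (c k) (a (p ξ) (a (c t) (a (p ξ⁻¹) (a (c k⁻¹) (a (p ξ) (a (c t⁻¹)
      (a (p ξ⁻¹) (c w⁻¹))))))))
  · simp only [wordToFree_append, wordToFree_powWord, hW, lastRel, commutatorElement_def]
    group

theorem finite_codeRels (c : PresCode) : (codeRels c).Finite := by
  refine (c.2.finite_toSet.image (wordToFree c.1)).subset ?_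
  rintro _ ⟨w, hw, rfl⟩
  exact ⟨w, hw, rfl⟩

/-- Finitely many fixed relators and a computable sequence of further relators give a computable
sequence of codes. -/
theorem exists_code {N : ℕ} (hN : 0 < N) {T : Set (FreeGroup (Fin N))} (hT : T.Finite)
    (r : ℕ → FreeGroup (Fin N)) (f : ℕ → List (ℕ × Bool)) (hf : Computable f)
    (hr : ∀ n, wordToFree N (f n) = r n) :
    ∃ L : ℕ → List (List (ℕ × Bool)), Computable L ∧
      ∀ n, codeRels (N, L n) = insert (r n) T := by
  choose W hW using wordToFree_surjective hN
  refine ⟨fun n => f n :: hT.toFinset.toList.map W,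
    Computable.list_cons.comp hf (Computable.const _), fun n => ?_⟩
  ext g
  simp only [codeRels, List.mem_cons, List.mem_map, Finset.mem_toList, Set.Finite.mem_toFinset,
    Set.mem_ofPred_eq, Set.mem_insert_iff]
  constructor
  · rintro ⟨w, rfl | ⟨g', hg', rfl⟩, rfl⟩
    · exact Or.inl (hr n)
    · rw [hW]; exact Or.inr hg'
  · rintro (rfl | h)
    · exact ⟨_, Or.inl rfl, (hr n).symm⟩
    · exact ⟨W g, Or.inr ⟨g, h, rfl⟩, (hW g).symm⟩

section FreeProduct
variable {n₀ N : ℕ} {X : Type} (σ : Fin n₀ ⊕ X ≃ Fin N) {T₀ : Set (FreeGroup (Fin n₀))}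
  {T : Set (FreeGroup (Fin N))} {T₁ : Set (FreeGroup X)}

/-- If the relations `T₁` force the generators `X` to be trivial, then they do not change the group
when they are added to a presentation on further generators. -/
theorem nonempty_equiv_of_trivial
    (hT : T = FreeGroup.map (fun i => σ (.inl i)) '' T₀ ∪ FreeGroup.map (fun x => σ (.inr x)) '' T₁)
    (h : ∀ (P : Type) [Group P] (φ : FreeGroup X →* P), (∀ r ∈ T₁, φ r = 1) → ∀ x, φ x = 1) :
    Nonempty (PresentedGroup T ≃* PresentedGroup T₀) := by
  subst hT
  set T := FreeGroup.map (fun i => σ (.inl i)) '' T₀ ∪ FreeGroup.map (fun x => σ (.inr x)) '' T₁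
  have hx : ∀ x, (PresentedGroup.of (σ (.inr x)) : PresentedGroup T) = 1 := by
    intro x
    have := h (PresentedGroup T) ((PresentedGroup.mk T).comp (FreeGroup.map fun x => σ (.inr x)))
      (fun r hr => PresentedGroup.one_of_mem (Or.inr ⟨r, hr, rfl⟩)) (FreeGroup.of x)
    simpa [PresentedGroup.of] using this
  let a : Fin N → PresentedGroup T₀ := fun j => Sum.elim PresentedGroup.of (fun _ => 1) (σ.symm j)
  have ha₀ : (FreeGroup.lift a).comp (FreeGroup.map fun i => σ (.inl i)) = PresentedGroup.mk T₀ := by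
    ext i
    simp [a, PresentedGroup.of]
  have ha₁ : (FreeGroup.lift a).comp (FreeGroup.map fun x => σ (.inr x)) = 1 := by
    ext x
    simp [a]
  have ha : ∀ r ∈ T, FreeGroup.lift a r = 1 := by
    rintro _ (⟨r, hr, rfl⟩ | ⟨r, hr, rfl⟩)
    · exact (DFunLike.congr_fun ha₀ r).trans (PresentedGroup.one_of_mem hr)
    · exact DFunLike.congr_fun ha₁ r
  let b : Fin n₀ → PresentedGroup T := fun i => PresentedGroup.of (σ (.inl i))
  have hb₀ : FreeGroup.lift b = (PresentedGroup.mk T).comp (FreeGroup.map fun i => σ (.inl i)) := by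
    ext i
    simp [b, PresentedGroup.of]
  have hb : ∀ r ∈ T₀, FreeGroup.lift b r = 1 := by
    intro r hr
    rw [hb₀]
    exact PresentedGroup.one_of_mem (Or.inl ⟨r, hr, rfl⟩)
  refine ⟨MonoidHom.toMulEquiv (PresentedGroup.toGroup ha) (PresentedGroup.toGroup hb) ?_ ?_⟩
  · refine PresentedGroup.ext fun j => ?_
    obtain ⟨i | x, rfl⟩ := σ.surjective j
    · simp [PresentedGroup.toGroup.of, a, b]
    · simp [a, hx]
  · refine PresentedGroup.ext fun i => ?_
    simp [PresentedGroup.toGroup.of, a, b]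

/-- If the generators `X` and the relations `T₁` have the quotient `A`, then the group presented by
the union of both presentations maps onto the free product. -/
theorem exists_surjective_coprod {A : Type} [Group A]
    (hT : T = FreeGroup.map (fun i => σ (.inl i)) '' T₀ ∪ FreeGroup.map (fun x => σ (.inr x)) '' T₁)
    (φ : FreeGroup X →* A) (hφ : Surjective φ) (h : ∀ r ∈ T₁, φ r = 1) :
    ∃ π : PresentedGroup T →* Monoid.Coprod (PresentedGroup T₀) A, Surjective π := by
  subst hT
  let a : Fin N → Monoid.Coprod (PresentedGroup T₀) A := fun j =>
    Sum.elim (fun i => Monoid.Coprod.inl (PresentedGroup.of i))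
      (fun x => Monoid.Coprod.inr (φ (FreeGroup.of x))) (σ.symm j)
  have ha₀ : (FreeGroup.lift a).comp (FreeGroup.map fun i => σ (.inl i)) =
      Monoid.Coprod.inl.comp (PresentedGroup.mk T₀) := by
    ext i
    simp [a, PresentedGroup.of]
  have ha₁ : (FreeGroup.lift a).comp (FreeGroup.map fun x => σ (.inr x)) =
      Monoid.Coprod.inr.comp φ := by
    ext x
    simp [a]
  refine ⟨PresentedGroup.toGroup (f := a) ?_, ?_⟩
  · rintro _ (⟨r, hr, rfl⟩ | ⟨r, hr, rfl⟩)
    · refine (DFunLike.congr_fun ha₀ r).trans ?_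
      rw [MonoidHom.comp_apply, PresentedGroup.one_of_mem hr, map_one]
    · refine (DFunLike.congr_fun ha₁ r).trans ?_
      rw [MonoidHom.comp_apply, h r hr, map_one]
  · suffices hs : Surjective (FreeGroup.lift a) by
      intro y
      obtain ⟨x, rfl⟩ := hs y
      exact ⟨PresentedGroup.mk _ x, rfl⟩
    rw [← MonoidHom.range_eq_top, eq_top_iff, ← Monoid.Coprod.range_inl_sup_range_inr]
    refine sup_le ?_ ?_
    · rintro _ ⟨y, rfl⟩
      obtain ⟨x, rfl⟩ := PresentedGroup.mk_surjective _ y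
      exact ⟨_, DFunLike.congr_fun ha₀ x⟩
    · rintro _ ⟨y, rfl⟩
      obtain ⟨x, rfl⟩ := hφ y
      exact ⟨_, DFunLike.congr_fun ha₁ x⟩

end FreeProduct

theorem map_lastRel {F F' : Type} [Group F] [Group F'] (f : F →* F') (k t ξ w : F) (n : ℕ) :
    f (lastRel k t ξ w n) = lastRel (f k) (f t) (f ξ) (f w) n := by
  simp [lastRel, map_commutatorElement]

/-- If the equivalence of a configuration with `c₀` is undecidable for a computable sequence of
configurations, then the isomorphism type of every presentation is undecidable. -/
theorem not_computable_iso {Q κ I : Type} [Fintype κ] [DecidableEq κ] [Finite Q] [Finite I]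
    (M : AffSys Q κ I) (c₀ : Q × (κ → ℤ)) (q : Q) (l : κ) (e : ℕ → ℕ) (he : Computable e)
    (hM : ¬ ∃ h : ℕ → Bool, Computable h ∧
      ∀ n, h n = true ↔ Relation.EqvGen M.Step c₀ (q, Pi.single l (e n : ℤ)))
    (c : PresCode) : ¬ ∃ h : PresCode → Bool, Computable h ∧
      ∀ c', h c' = true ↔ Nonempty (codeGroup c' ≃* codeGroup c) := by
  rintro ⟨h, hc, hh⟩
  obtain ⟨X, _, R, k, t, ξ, w, hne, hR, htriv, hinf⟩ := exists_relator_family M c₀ q l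
  have := Fintype.ofFinite X
  let N := c.1 + Fintype.card X
  have hN : 0 < N := Nat.add_pos_right _ Fintype.card_pos
  let σ : Fin c.1 ⊕ X ≃ Fin N :=
    (Equiv.sumCongr (Equiv.refl _) (Fintype.equivFin X)).trans finSumFinEquiv
  let j := FreeGroup.map fun x => σ (.inr x)
  obtain ⟨f, hf, hfr⟩ := exists_lastRel_word hN (j k) (j t) (j ξ) (j w)
  obtain ⟨L, hL, hLr⟩ := exists_code hN
    (T := FreeGroup.map (fun i => σ (.inl i)) '' codeRels c ∪ j '' R)
    (((finite_codeRels c).image _).union (hR.image _)) (fun n => j (lastRel k t ξ w (e n)))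
    (fun n => f (e n)) (hf.comp he) (fun n => by rw [hfr, map_lastRel])
  have hT : ∀ n, codeRels (N, L n) = FreeGroup.map (fun i => σ (.inl i)) '' codeRels c ∪
      FreeGroup.map (fun x => σ (.inr x)) '' insert (lastRel k t ξ w (e n)) R := by
    intro n
    rw [hLr, Set.image_insert_eq, Set.union_insert]
  refine hM ⟨fun n => h (N, L n), hc.comp ((Computable.const N).pair hL), fun n => ?_⟩
  rw [hh]
  constructor
  · rintro ⟨i⟩
    by_contra hn
    obtain ⟨A, _, _, φ, hφ, h1, h2⟩ := hinf _ hn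
    obtain ⟨π, hπ⟩ := exists_surjective_coprod σ (hT n) φ hφ (by
      rintro r (rfl | hr)
      exacts [h2, h1 r hr])
    exact not_surjective_coprod (G := codeGroup c) PresentedGroup.of
      (PresentedGroup.closure_range_of _) (π.comp i.symm.toMonoidHom) (hπ.comp i.symm.surjective)
  · intro hn
    exact nonempty_equiv_of_trivial σ (hT n) fun P _ φ hφ =>
      htriv _ hn P φ (fun r hr => hφ r (Or.inr hr)) (hφ _ (Or.inl rfl))

end IsoClass

/-- A nonempty class of finite presentations which is closed under isomorphism and within
which the isomorphism problem is solvable cannot be a computable (recursive) set. -/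
theorem isom_solvable_class_not_recursive
    (S : Set (ℕ × List (List (ℕ × Bool)))) (hne : S.Nonempty)
    (hclosed : ∀ c ∈ S, ∀ c' : ℕ × List (List (ℕ × Bool)),
      Nonempty (codeGroup c' ≃* codeGroup c) → c' ∈ S)
    (hd : ∃ d : (ℕ × List (List (ℕ × Bool))) × (ℕ × List (List (ℕ × Bool))) → Bool,
      Computable d ∧ ∀ c ∈ S, ∀ c' ∈ S,
        (d (c, c') = true ↔ Nonempty (codeGroup c ≃* codeGroup c'))) :
    ¬ ∃ m : ℕ × List (List (ℕ × Bool)) → Bool, Computable m ∧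
        ∀ c : ℕ × List (List (ℕ × Bool)), m c = true ↔ c ∈ S := by
  rintro ⟨m, hm, hmS⟩
  obtain ⟨d, hd, hdS⟩ := hd
  obtain ⟨c₀, hc₀⟩ := hne
  obtain ⟨Q, _, M, b, q, hM⟩ := IsoClass.exists_undecidable_system
  refine IsoClass.not_computable_iso M b q Turing.PartrecToTM2.K'.main IsoClass.inputNum
    IsoClass.primrec_inputNum.to_comp hM c₀ ⟨fun c => m c && d (c, c₀), ?_, fun c => ?_⟩
  · exact Primrec.and.to_comp.comp hm (hd.comp (Computable.id.pair (Computable.const c₀)))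
  · rw [Bool.and_eq_true, hmS]
    constructor
    · rintro ⟨hc, h⟩
      exact (hdS c hc c₀ hc₀).1 h
    · intro h
      have hc := hclosed c₀ hc₀ c h
      exact ⟨hc, (hdS c hc c₀ hc₀).2 h⟩
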